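/- arXiv:2405.00778 — 5 statements merged into one kernel-verified Lean document; each statement's English description precedes it below -/
import Mathlib

section
/- Let m, n ≥ 2 and let F be any field. For a set E ⊆ [m]×[n], the complement ([m]×[n]) ∖ E is spanning in the tensor matroid T_{m,n}(m−2, n−2, F) (i.e., E is a correctable erasure pattern for an (m,n,a=2,b=2) maximally recoverable tensor code) if and only if E, viewed as the edge set of a bipartite graph, admits an orientation with no directed cycles and no alternating cycles. -/
open scoped Classical

noncomputable section

/-- The field of fractions of the polynomial ring over `F` in variables
`X i k` (`i ∈ [m]`, `k ∈ [s]`) and `Y j l` (`j ∈ [n]`, `l ∈ [r]`). -/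
abbrev TField (F : Type*) [Field F] (m n s r : ℕ) :=
  FractionRing (MvPolynomial ((Fin m × Fin s) ⊕ (Fin n × Fin r)) F)

/-- The vector `u_i ⊗ v_j ∈ K_F^{[s]×[r]}` with `(k,l)`-entry `X_{ik} · Y_{jl}`. -/
noncomputable def tvec (F : Type*) [Field F] (m n s r : ℕ) (e : Fin m × Fin n) :
    Fin s × Fin r → TField F m n s r := fun kl =>
  algebraMap (MvPolynomial ((Fin m × Fin s) ⊕ (Fin n × Fin r)) F) (TField F m n s r)
      (MvPolynomial.X (Sum.inl (e.1, kl.1))) *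
  algebraMap (MvPolynomial ((Fin m × Fin s) ⊕ (Fin n × Fin r)) F) (TField F m n s r)
      (MvPolynomial.X (Sum.inr (e.2, kl.2)))

/-- `E` is independent in the tensor matroid `T_{m,n}(s,r,F)`: the family
`{u_i ⊗ v_j : (i,j) ∈ E}` is linearly independent over `K_F`. -/
def TensorIndep (F : Type*) [Field F] (m n s r : ℕ) (E : Set (Fin m × Fin n)) : Prop :=
  LinearIndependent (TField F m n s r) (fun e : E => tvec F m n s r e)

/-- `E` is spanning in the tensor matroid `T_{m,n}(s,r,F)`: the family
`{u_i ⊗ v_j : (i,j) ∈ E}` spans `K_F^{[s]×[r]}`. -/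
def TensorSpanning (F : Type*) [Field F] (m n s r : ℕ) (E : Set (Fin m × Fin n)) : Prop :=
  Submodule.span (TField F m n s r) (tvec F m n s r '' E) = ⊤

/-- A cycle of length `2k` in a bipartite graph `G ⊆ [m]×[n]`: distinct `i_1,…,i_k ∈ [m]`
and distinct `j_1,…,j_k ∈ [n]` such that every edge `(i_t, j_t)` and `(i_{t+1}, j_t)`
(indices mod `k`) lies in `G`. -/
def IsCycle {m n : ℕ} (G : Set (Fin m × Fin n)) (k : ℕ)
    (i : ZMod k → Fin m) (j : ZMod k → Fin n) : Prop :=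
  2 ≤ k ∧ Function.Injective i ∧ Function.Injective j ∧
    (∀ t, (i t, j t) ∈ G) ∧ (∀ t, (i (t + 1), j t) ∈ G)

/-- An orientation of the edges of `G` is a map `o` assigning to each edge a direction;
`o e = true` means the edge `e` is oriented from its `[m]`-endpoint to its `[n]`-endpoint.
The orientation is good if no cycle of `G` is directed (all edges oriented in the
direction of some traversal) and no cycle of `G` is alternating (every vertex of the
cycle is a source or a sink for the two incident cycle edges). -/
def GoodOrientation {m n : ℕ} (G : Set (Fin m × Fin n)) (o : Fin m × Fin n → Bool) : Prop :=
  ∀ (k : ℕ) (i : ZMod k → Fin m) (j : ZMod k → Fin n), IsCycle G k i j →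
    (¬ ((∀ t, o (i t, j t) = true ∧ o (i (t + 1), j t) = false) ∨
        (∀ t, o (i t, j t) = false ∧ o (i (t + 1), j t) = true))) ∧
    (¬ (∀ t, o (i t, j t) = o (i (t + 1), j t) ∧ o (i t, j t) = o (i t, j (t - 1))))


open Polynomial in
lemma exists_minor.{u1, u2, u3} {k : Type u1} {W : Type u2} {ι : Type u3} [Field k] [AddCommGroup W] [Module k W]
    [FiniteDimensional k W] [Fintype ι] (v : ι → Module.Dual k W)
    (h : ∀ N, (∀ u, v u N = 0) → N = 0) :
    ∃ (κ : Type u3) (_ : Fintype κ) (a : κ → ι) (e : Module.Basis κ k W),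
      Function.Injective a ∧ Matrix.det (Matrix.of fun t s => v (a t) (e s)) ≠ 0 := by
  obtain ⟨κ, a, ha, hsp, hli⟩ := exists_linearIndependent' k v
  have : Fintype κ := Fintype.ofInjective a ha
  have htop : Submodule.span k (Set.range v) = ⊤ := by
    have hco : (Submodule.span k (Set.range v)).dualCoannihilator = ⊥ := by
      rw [eq_bot_iff]
      intro N hN
      rw [Submodule.mem_dualCoannihilator] at hN
      exact h N fun u => hN _ (Submodule.subset_span ⟨u, rfl⟩)
    rw [← Subspace.dualCoannihilator_dualAnnihilator_eq (W := Submodule.span k (Set.range v)), hco]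
    exact Submodule.dualAnnihilator_bot
  let b : Module.Basis κ k (Module.Dual k W) := Module.Basis.mk hli (by rw [hsp, htop])
  have hcard : Module.finrank k W = Fintype.card κ := by
    rw [← Subspace.dual_finrank_eq, Module.finrank_eq_card_basis b]
  let e : Module.Basis κ k W := (Module.finBasisOfFinrankEq k W hcard).reindex (Fintype.equivFin κ).symm
  refine ⟨κ, inferInstance, a, e, ha, ?_⟩
  intro hdet
  rw [← Matrix.exists_mulVec_eq_zero_iff] at hdet
  obtain ⟨x, hx, hM⟩ := hdet
  apply hx
  have hN : ∑ s, x s • e s = 0 := by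
    apply h
    have key : ∀ f ∈ Submodule.span k (Set.range v), f (∑ s, x s • e s) = 0 := by
      rw [← hsp]
      intro f hf
      induction hf using Submodule.span_induction with
      | mem f hf =>
        obtain ⟨t, rfl⟩ := hf
        have := congrFun hM t
        simp only [Matrix.mulVec, dotProduct, Matrix.of_apply, Pi.zero_apply] at this
        simp only [map_sum, map_smul, smul_eq_mul, Function.comp]
        rw [← this]
        exact Finset.sum_congr rfl fun s _ => mul_comm _ _
      | zero => simp
      | add f g _ _ hf hg => simp only [LinearMap.add_apply, hf, hg, add_zero]
      | smul r f _ hf => simp only [LinearMap.smul_apply, hf, smul_zero]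
    exact fun u => key _ (Submodule.subset_span ⟨u, rfl⟩)
  have := Fintype.linearIndependent_iff.1 e.linearIndependent x hN
  exact funext this

open Polynomial in
lemma poly_core {k W ι : Type*} [Field k] [AddCommGroup W] [Module k W]
    [FiniteDimensional k W] [Fintype ι] [Nonempty ι] (z : ι → k)
    (a b : ι → Module.Dual k W) (hb : ∑ u, b u = 0) (c0 : k)
    (h : ∀ N, (∀ u, a u N + (z u - c0) * b u N = 0) → N = 0) :
    ∃ p : k[X], p ≠ 0 ∧ p.natDegree < Fintype.card ι ∧
      ∀ c, p.eval c ≠ 0 → ∀ N, (∀ u, a u N + (z u - c) * b u N = 0) → N = 0 := by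
  obtain ⟨κ, _, f, e, hf, hdet⟩ := exists_minor (fun u => a u + (z u - c0) • b u)
    (fun N hN => h N fun u => by simpa using hN u)
  let A : Matrix κ κ k := Matrix.of fun t s => - b (f t) (e s)
  let B : Matrix κ κ k := Matrix.of fun t s => (a (f t) + z (f t) • b (f t)) (e s)
  let p : k[X] := Matrix.det ((X : k[X]) • A.map C + B.map C)
  have hev : ∀ c, p.eval c =
      Matrix.det (Matrix.of fun t s => (a (f t) + (z (f t) - c) • b (f t)) (e s)) := by
    intro c
    have : p.eval c = (Polynomial.evalRingHom c) p := rfl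
    rw [this, RingHom.map_det]
    congr 1
    ext t s
    simp [A, B, Matrix.map_apply]
    ring
  have hp0 : p ≠ 0 := by
    intro hp
    apply hdet
    rw [← hev c0, hp, eval_zero]
  refine ⟨p, hp0, ?_, ?_⟩
  · have h1 : p.natDegree ≤ Fintype.card κ := natDegree_det_X_add_C_le A B
    have h2 : Fintype.card κ ≤ Fintype.card ι := Fintype.card_le_of_injective f hf
    rcases h2.lt_or_eq with h3 | h3
    · omega
    · have hbij : Function.Bijective f := (Fintype.bijective_iff_injective_and_card f).2 ⟨hf, h3⟩
      have hcoef : p.coeff (Fintype.card κ) = 0 := by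
        have : p.coeff (Fintype.card κ) = A.det := coeff_det_X_add_C_card A B
        rw [this]
        have : Nonempty κ := by
          rw [← Fintype.card_pos_iff, h3]; exact Fintype.card_pos
        rw [← Matrix.exists_vecMul_eq_zero_iff]
        refine ⟨fun _ => 1, ?_, ?_⟩
        · intro h0
          have := congrFun h0 (Classical.arbitrary κ)
          simp at this
        · ext s
          simp only [Matrix.vecMul, dotProduct, A, Matrix.of_apply, one_mul, Pi.zero_apply]
          rw [Finset.sum_neg_distrib, hbij.sum_comp (fun u => b u (e s))]
          have := congrArg (fun φ : Module.Dual k W => φ (e s)) hb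
          simpa using this
      rcases h1.lt_or_eq with h4 | h4
      · omega
      · exfalso
        apply hp0
        rw [← leadingCoeff_eq_zero, leadingCoeff, h4, hcoef]
  · intro c hc N hN
    rw [hev] at hc
    by_contra hne
    apply hc
    rw [← Matrix.exists_mulVec_eq_zero_iff]
    refine ⟨fun s => e.repr N s, ?_, ?_⟩
    · intro h0
      apply hne
      apply e.repr.injective
      ext s
      simpa using congrFun h0 s
    · ext t
      simp only [Matrix.mulVec, dotProduct, Matrix.of_apply, Pi.zero_apply]
      have := hN (f t)
      have h5 : (a (f t) + (z (f t) - c) • b (f t)) N = 0 := by simpa using this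
      conv at h5 => lhs; rw [← e.sum_repr N]
      rw [map_sum] at h5
      rw [← h5]
      exact Finset.sum_congr rfl fun s _ => by rw [map_smul, smul_eq_mul, mul_comm]

def HC {k V : Type*} [Field k] [Fintype V] (N : V → V → k) : List V → Prop
  | [] => True
  | u :: l => (∑ w, if w ∈ l then N u w else 0) = 0 ∧ HC N l

def Cond {k V : Type*} [Field k] [Fintype V] (G : V → V → Prop) (z : V → k) (l : List V) (c : k)
    (N : V → V → k) : Prop :=
  (∀ u w, N u w = N w u) ∧ (∀ u w, ¬ G u w → N u w = 0) ∧ (∀ u, ∑ w, N u w = 0) ∧ HC N l ∧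
    ∀ u, u ∉ l → (∑ w, if w ∈ l then N u w else 0) +
      (z u - c) * (∑ w, if w ∈ l then 0 else N u w / (z u - z w)) = 0

def baseW {k V : Type*} [Field k] [Fintype V] (G : V → V → Prop) (l : List V) :
    Submodule k (V → V → k) where
  carrier := {N | (∀ u w, N u w = N w u) ∧ (∀ u w, ¬ G u w → N u w = 0) ∧
    (∀ u, ∑ w, N u w = 0) ∧ HC N l}
  add_mem' := by
    rintro N M ⟨h1, h2, h3, h4⟩ ⟨g1, g2, g3, g4⟩
    refine ⟨fun u w => by simp [h1 u w, g1 u w], fun u w h => by simp [h2 u w h, g2 u w h],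
      fun u => by simp [Finset.sum_add_distrib, h3, g3], ?_⟩
    clear h1 h2 h3 g1 g2 g3
    induction l with
    | nil => trivial
    | cons u l ih =>
      refine ⟨?_, ih h4.2 g4.2⟩
      have : (∑ w, if w ∈ l then (N + M) u w else 0) =
        (∑ w, if w ∈ l then N u w else 0) + ∑ w, if w ∈ l then M u w else 0 := by
        rw [← Finset.sum_add_distrib]
        exact Finset.sum_congr rfl fun w _ => by split_ifs <;> simp
      rw [this, h4.1, g4.1, add_zero]
  zero_mem' := by
    refine ⟨by simp, by simp, by simp, ?_⟩
    induction l with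
    | nil => trivial
    | cons u l ih => exact ⟨by simp, ih⟩
  smul_mem' := by
    rintro r N ⟨h1, h2, h3, h4⟩
    refine ⟨fun u w => by simp [h1 u w], fun u w h => by simp [h2 u w h],
      fun u => by simp [← Finset.mul_sum, h3], ?_⟩
    clear h1 h2 h3
    induction l with
    | nil => trivial
    | cons u l ih =>
      refine ⟨?_, ih h4.2⟩
      have : (∑ w, if w ∈ l then (r • N) u w else 0) =
        r * (∑ w, if w ∈ l then N u w else 0) := by
        rw [Finset.mul_sum]
        exact Finset.sum_congr rfl fun w _ => by split_ifs <;> simp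
      rw [this, h4.1, mul_zero]

open Polynomial in
lemma core_step {k V : Type*} [Field k] [Fintype V] (G : V → V → Prop) (z : V → k)
    (hz : Function.Injective z) (l : List V) (hl : ∃ u, u ∉ l) (c0 : k)
    (h : ∀ N, Cond G z l c0 N → N = 0) :
    ∃ p : k[X], p ≠ 0 ∧ (∃ u, u ∉ l ∧ p.eval (z u) ≠ 0) ∧
      ∀ c, p.eval c ≠ 0 → ∀ N, Cond G z l c N → N = 0 := by
  let ι := {u : V // u ∉ l}
  have : Nonempty ι := ⟨⟨hl.choose, hl.choose_spec⟩⟩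
  let W := baseW (k := k) G l
  let a : ι → Module.Dual k W := fun u =>
    { toFun := fun N => ∑ w, if w ∈ l then N.1 u.1 w else 0
      map_add' := by
        intro N M
        rw [← Finset.sum_add_distrib]
        exact Finset.sum_congr rfl fun w _ => by split_ifs <;> simp
      map_smul' := by
        intro r N
        rw [RingHom.id_apply, smul_eq_mul, Finset.mul_sum]
        exact Finset.sum_congr rfl fun w _ => by split_ifs <;> simp }
  let b : ι → Module.Dual k W := fun u =>
    { toFun := fun N => ∑ w, if w ∈ l then 0 else N.1 u.1 w / (z u - z w)
      map_add' := by
        intro N M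
        rw [← Finset.sum_add_distrib]
        exact Finset.sum_congr rfl fun w _ => by split_ifs <;> simp [add_div]
      map_smul' := by
        intro r N
        rw [RingHom.id_apply, smul_eq_mul, Finset.mul_sum]
        exact Finset.sum_congr rfl fun w _ => by split_ifs <;> simp [mul_div_assoc] }
  have hb : ∑ u, b u = 0 := by
    ext N
    rw [LinearMap.sum_apply]
    change ∑ u : ι, (∑ w, if w ∈ l then 0 else N.1 u.1 w / (z u - z w)) = 0
    have h1 : ∀ u : ι, (∑ w, if w ∈ l then 0 else N.1 u.1 w / (z u - z w)) =
        ∑ w : ι, N.1 u.1 w.1 / (z u - z w) := by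
      intro u
      rw [← Finset.sum_subtype (Finset.univ.filter fun w => w ∉ l) (by simp)
        (fun w => N.1 u.1 w / (z u - z w)), Finset.sum_filter]
      exact Finset.sum_congr rfl fun w _ => by by_cases hw : w ∈ l <;> simp [hw]
    simp_rw [h1]
    rw [← Fintype.sum_prod_type' (f := fun u w : ι => N.1 u.1 w.1 / (z u - z w))]
    refine Finset.sum_involution (fun x _ => (x.2, x.1)) ?_ ?_ ?_ ?_
    · rintro ⟨u, w⟩ _
      simp only
      rw [N.2.1 w.1 u.1, ← neg_sub (z u.1) (z w.1), div_neg, add_neg_cancel]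
    · rintro ⟨u, w⟩ _ hne heq
      apply hne
      have : w = u := congrArg Prod.fst heq
      subst this
      simp
    · simp
    · simp
  obtain ⟨p, hp0, hdeg, hp⟩ := poly_core (fun u : ι => z u.1) a b hb c0 (by
    intro N hN
    apply Subtype.ext
    exact h N.1 ⟨N.2.1, N.2.2.1, N.2.2.2.1, N.2.2.2.2, fun u hu => hN ⟨u, hu⟩⟩)
  refine ⟨p, hp0, ?_, ?_⟩
  · by_contra hcon
    push Not at hcon
    apply hp0
    exact eq_zero_of_natDegree_lt_card_of_eval_eq_zero p (f := fun u : ι => z u.1)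
      (hz.comp Subtype.val_injective) (fun u => hcon u.1 u.2) hdeg
  · intro c hc N hN
    have := hp c hc ⟨N, hN.1, hN.2.1, hN.2.2.1, hN.2.2.2.1⟩ (fun u => hN.2.2.2.2 u.1 u.2)
    exact congrArg Subtype.val this

lemma cond_cons {k V : Type*} [Field k] [Fintype V] (G : V → V → Prop) (z : V → k)
    (hz : Function.Injective z) (l : List V) (u : V) (hu : u ∉ l) (N : V → V → k) :
    Cond G z l (z u) N ↔ Cond G z (u :: l) (z u) N := by
  have key : ∀ v, v ∉ u :: l → 
      (∑ w, if w ∈ l then N v w else 0) +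
        (z v - z u) * (∑ w, if w ∈ l then 0 else N v w / (z v - z w)) =
      (∑ w, if w ∈ u :: l then N v w else 0) +
        (z v - z u) * (∑ w, if w ∈ u :: l then 0 else N v w / (z v - z w)) := by
    intro v hv
    rw [Finset.mul_sum, Finset.mul_sum, ← Finset.sum_add_distrib, ← Finset.sum_add_distrib]
    refine Finset.sum_congr rfl fun w _ => ?_
    by_cases hw : w ∈ l
    · simp [hw]
    · by_cases hwu : w = u
      · subst hwu
        have : z v - z w ≠ 0 := by
          rw [sub_ne_zero]
          intro h
          exact hv (by rw [hz h]; simp)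
        simp [hw]
        field_simp
      · simp [hw, hwu]
  unfold Cond
  constructor
  · rintro ⟨h1, h2, h3, h4, h5⟩
    refine ⟨h1, h2, h3, ⟨?_, h4⟩, ?_⟩
    · simpa using h5 u hu
    · intro v hv
      rw [← key v hv]
      exact h5 v (fun h => hv (List.mem_cons_of_mem _ h))
  · rintro ⟨h1, h2, h3, ⟨h4, h4'⟩, h5⟩
    refine ⟨h1, h2, h3, h4', ?_⟩
    intro v hv
    by_cases hvu : v = u
    · subst hvu
      rw [h4]; simp
    · have hv' : v ∉ u :: l := by simp [hv, hvu]
      rw [key v hv']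
      exact h5 v hv'

/-- forward: from distinct points to an ordering -/
lemma core_forward {k V : Type*} [Field k] [Fintype V] (G : V → V → Prop) (z : V → k)
    (hz : Function.Injective z) (c0 : k) (h : ∀ N, Cond G z [] c0 N → N = 0) :
    ∃ l : List V, l.Nodup ∧ (∀ u, u ∈ l) ∧ ∃ c, ∀ N, Cond G z l c N → N = 0 := by
  have main : ∀ d : ℕ, d ≤ Fintype.card V →
      ∃ l : List V, l.Nodup ∧ l.length = d ∧ ∃ c, ∀ N, Cond G z l c N → N = 0 := by
    intro d
    induction d with
    | zero => exact fun _ => ⟨[], by simp, rfl, c0, h⟩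
    | succ d ih =>
      intro hd
      obtain ⟨l, hnd, hlen, c, hc⟩ := ih (by omega)
      have hex : ∃ u, u ∉ l := by
        by_contra hcon
        push Not at hcon
        have : Fintype.card V ≤ l.length := by
          rw [← List.toFinset_card_of_nodup hnd, ← Finset.card_univ]
          exact Finset.card_le_card fun u _ => by simpa using hcon u
        omega
      obtain ⟨p, hp0, ⟨u, hu, hpu⟩, hp⟩ := core_step G z hz l hex c hc
      refine ⟨u :: l, List.nodup_cons.2 ⟨hu, hnd⟩, by simp [hlen], z u, ?_⟩
      intro N hN
      exact hp _ hpu N ((cond_cons G z hz l u hu N).2 hN)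
  obtain ⟨l, hnd, hlen, hc⟩ := main _ le_rfl
  refine ⟨l, hnd, ?_, hc⟩
  intro u
  have : l.toFinset = Finset.univ := by
    apply Finset.eq_univ_of_card
    rw [List.toFinset_card_of_nodup hnd, hlen]
  have h2 : u ∈ l.toFinset := by rw [this]; simp
  simpa using h2

/-- backward: from an ordering to distinct points -/
lemma core_backward {k V : Type*} [Field k] [Infinite k] [Fintype V] (G : V → V → Prop)
    (l : List V) (hnd : l.Nodup)
    (h : ∃ (z : V → k) (c : k), Function.Injective z ∧ (∀ u, z u ≠ c) ∧
      ∀ N, Cond G z l c N → N = 0) :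
    ∃ (z : V → k) (c : k), Function.Injective z ∧ (∀ u, z u ≠ c) ∧
      ∀ N, Cond G z [] c N → N = 0 := by
  induction l with
  | nil => exact h
  | cons u l ih =>
    obtain ⟨hu, hnd'⟩ := List.nodup_cons.1 hnd
    apply ih hnd'
    obtain ⟨z, c, hz, hzc, hN⟩ := h
    let z' : V → k := fun v => if v = u then c else z v
    have hz' : Function.Injective z' := by
      intro v w hvw
      simp only [z'] at hvw
      split_ifs at hvw with h1 h2 h2
      · rw [h1, h2]
      · exact absurd hvw.symm (hzc w)
      · exact absurd hvw (hzc v)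
      · exact hz hvw
    have hzu : z' u = c := by simp [z']
    have h1 : ∀ N, Cond G z' l (z' u) N → N = 0 := by
      intro N hC
      rw [cond_cons G z' hz' l u hu] at hC
      apply hN
      obtain ⟨g1, g2, g3, g4, g5⟩ := hC
      refine ⟨g1, g2, g3, g4, ?_⟩
      intro v hv
      have := g5 v hv
      rw [hzu] at this
      have hvu : v ≠ u := by rintro rfl; simp at hv
      have hzv : z' v = z v := by simp [z', hvu]
      rw [hzv] at this
      refine Eq.trans ?_ this
      congr 2
      apply Finset.sum_congr rfl
      intro w _
      by_cases hw : w = u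
      · subst hw; simp
      · simp [z', hw]
    obtain ⟨p, hp0, -, hp⟩ := core_step G z' hz' l ⟨u, hu⟩ (z' u) h1
    obtain ⟨c', hc'⟩ := Infinite.exists_notMem_finset (p.roots.toFinset ∪ Finset.univ.image z')
    simp only [Finset.mem_union, Multiset.mem_toFinset, Finset.mem_image, Finset.mem_univ,
      true_and, not_or, not_exists, Polynomial.mem_roots hp0] at hc'
    exact ⟨z', c', hz', hc'.2, hp c' hc'.1⟩

lemma cycle_of_walk {m n : ℕ} (R : Fin m ⊕ Fin n → Fin m ⊕ Fin n → Prop)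
    (hR : ∀ u w, R u w → u.isLeft = !w.isLeft) (v : ℕ → Fin m ⊕ Fin n)
    (hv : ∀ t, R (v t) (v (t + 1))) (hnb : ∀ t, v (t + 2) ≠ v t) :
    ∃ (k : ℕ) (i : ZMod k → Fin m) (j : ZMod k → Fin n), 2 ≤ k ∧ Function.Injective i ∧
      Function.Injective j ∧ (∀ t, R (.inl (i t)) (.inr (j t))) ∧
      ∀ t, R (.inr (j t)) (.inl (i (t + 1))) := by
  have hex : ∃ d, 0 < d ∧ ∃ s, v s = v (s + d) := by
    obtain ⟨x, y, hxy, hv'⟩ := Finite.exists_ne_map_eq_of_infinite v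
    rcases lt_or_gt_of_ne hxy with h | h
    · exact ⟨y - x, by omega, x, by rw [hv']; congr 1; omega⟩
    · exact ⟨x - y, by omega, y, by rw [← hv']; congr 1; omega⟩
  let d := Nat.find hex
  obtain ⟨hd0, s, hs⟩ : 0 < d ∧ ∃ s, v s = v (s + d) := Nat.find_spec hex
  have hmin : ∀ e, e < d → 0 < e → ∀ s, v s ≠ v (s + e) := by
    intro e he h0 s hse
    exact Nat.find_min hex he ⟨h0, s, hse⟩
  let q : ℕ → Fin m ⊕ Fin n := fun x => v (s + x % d)
  have hq : ∀ x, R (q x) (q (x + 1)) := by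
    intro x
    have hlt := Nat.mod_lt x hd0
    by_cases h : x % d + 1 < d
    · have : (x + 1) % d = x % d + 1 := by
        rw [Nat.add_mod]
        have h1 : 1 % d = 1 := Nat.mod_eq_of_lt (by omega)
        rw [h1, Nat.mod_eq_of_lt h]
      simp only [q, this]
      exact hv _
    · have h1 : x % d = d - 1 := by omega
      have h2 : (x + 1) % d = 0 := by
        rw [← Nat.mod_add_div x d, h1]
        have : d - 1 + d * (x / d) + 1 = d * (x / d + 1) := by
          rw [mul_add, mul_one]; omega
        rw [this, Nat.mul_mod_right]
      simp only [q, h1, h2]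
      have := hv (s + (d - 1))
      rw [show s + (d - 1) + 1 = s + d by omega, ← hs] at this
      simpa using this
  have hqmod : ∀ x y, x % d = y % d → q x = q y := by
    intro x y h; simp only [q, h]
  have hqinj : ∀ x y, q x = q y → x % d = y % d := by
    intro x y h
    simp only [q] at h
    have h1 := Nat.mod_lt x hd0
    have h2 := Nat.mod_lt y hd0
    by_contra hne
    rcases lt_or_gt_of_ne hne with h3 | h3
    · exact hmin (y % d - x % d) (by omega) (by omega) (s + x % d) (by rw [h]; congr 1; omega)
    · exact hmin (x % d - y % d) (by omega) (by omega) (s + y % d) (by rw [← h]; congr 1; omega)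
  have hpar : ∀ x y, (q (x + y)).isLeft = ((q x).isLeft ^^ decide (y % 2 = 1)) := by
    intro x y
    induction y with
    | zero => simp
    | succ y ih =>
      have := hR _ _ (hq (x + y))
      rw [ih] at this
      rw [← add_assoc]
      rcases Nat.mod_two_eq_zero_or_one y with h | h
      · have h2 : (y + 1) % 2 = 1 := by omega
        simp [h, h2] at this ⊢
        revert this
        rcases q (x + y + 1) with a | a <;> rcases q x with b | b <;> simp
      · have h2 : (y + 1) % 2 = 0 := by omega
        simp [h, h2] at this ⊢
        revert this
        rcases q (x + y + 1) with a | a <;> rcases q x with b | b <;> simp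
  have hdeven : d % 2 = 0 := by
    have h1 := hpar 0 d
    have h2 : q (0 + d) = q 0 := hqmod _ _ (by simp)
    rw [h2] at h1
    rcases Nat.mod_two_eq_zero_or_one d with h | h
    · exact h
    · simp [h] at h1
      revert h1
      rcases q 0 with a | a <;> simp
  obtain ⟨k, hk⟩ : ∃ k, d = 2 * k := ⟨d / 2, by omega⟩
  have hk2 : 2 ≤ k := by
    by_contra hlt
    have : d = 2 := by omega
    rw [this] at hs
    exact hnb s hs.symm
  have : NeZero k := ⟨by omega⟩
  have : Fact (1 < k) := ⟨by omega⟩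
  obtain ⟨δ, hδ⟩ : ∃ δ, (q δ).isLeft = true := by
    by_cases h : (q 0).isLeft = true
    · exact ⟨0, h⟩
    · refine ⟨0 + 1, ?_⟩
      rw [hpar 0 1]
      simp at h
      simp [h]
  have hL : ∀ x, (q (δ + 2 * x)).isLeft = true := by
    intro x; rw [hpar, hδ]; simp
  have hRt : ∀ x, (q (δ + 2 * x + 1)).isRight = true := by
    intro x
    have := hpar δ (2 * x + 1)
    rw [hδ] at this
    have h2 : (2 * x + 1) % 2 = 1 := by omega
    rw [← add_assoc] at this
    simp [h2] at this
    exact this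
  let i : ZMod k → Fin m := fun t => (q (δ + 2 * t.val)).getLeft (hL _)
  let j : ZMod k → Fin n := fun t => (q (δ + 2 * t.val + 1)).getRight (hRt _)
  have hi : ∀ t, (Sum.inl (i t) : Fin m ⊕ Fin n) = q (δ + 2 * t.val) := by
    intro t; simp [i]
  have hj : ∀ t, (Sum.inr (j t) : Fin m ⊕ Fin n) = q (δ + 2 * t.val + 1) := by
    intro t; simp [j]
  have hcancel : ∀ e (t t' : ZMod k), (e + 2 * t.val) % d = (e + 2 * t'.val) % d → t = t' := by
    intro e t t' h
    have h3 : (2 * t.val) ≡ (2 * t'.val) [MOD d] := Nat.ModEq.add_left_cancel' e h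
    have h1 : t.val < k := ZMod.val_lt t
    have h2 : t'.val < k := ZMod.val_lt t'
    have h4 := h3
    unfold Nat.ModEq at h4
    rw [Nat.mod_eq_of_lt (by omega), Nat.mod_eq_of_lt (by omega)] at h4
    exact ZMod.val_injective k (by omega)
  refine ⟨k, i, j, hk2, ?_, ?_, ?_, ?_⟩
  · intro t t' h
    have : q (δ + 2 * t.val) = q (δ + 2 * t'.val) := by rw [← hi, ← hi, h]
    exact hcancel δ t t' (hqinj _ _ this)
  · intro t t' h
    have : q (δ + 2 * t.val + 1) = q (δ + 2 * t'.val + 1) := by rw [← hj, ← hj, h]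
    have := hqinj _ _ this
    exact hcancel (δ + 1) t t' (by
      rw [show δ + 1 + 2 * t.val = δ + 2 * t.val + 1 by ring,
        show δ + 1 + 2 * t'.val = δ + 2 * t'.val + 1 by ring]; exact this)
  · intro t
    rw [hi, hj]
    exact hq _
  · intro t
    rw [hi, hj]
    have : q (δ + 2 * (t + 1).val) = q (δ + 2 * t.val + 1 + 1) := by
      apply hqmod
      rw [ZMod.val_add, ZMod.val_one, hk, ← Nat.mul_mod_mul_left]
      rw [Nat.add_mod, Nat.mod_mod, ← Nat.add_mod]
      congr 1
    rw [this]
    exact hq _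

/-- bipartite adjacency with colour `β` -/
def SB {m n : ℕ} (E : Set (Fin m × Fin n)) (o : Fin m × Fin n → Bool) (β : Bool) :
    Fin m ⊕ Fin n → Fin m ⊕ Fin n → Prop
  | .inl i, .inr j => (i, j) ∈ E ∧ o (i, j) = β
  | .inr j, .inl i => (i, j) ∈ E ∧ o (i, j) = β
  | _, _ => False

def Rdir {m n : ℕ} (E : Set (Fin m × Fin n)) (o : Fin m × Fin n → Bool) :
    Fin m ⊕ Fin n → Fin m ⊕ Fin n → Prop
  | .inl i, .inr j => (i, j) ∈ E ∧ o (i, j) = true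
  | .inr j, .inl i => (i, j) ∈ E ∧ o (i, j) = false
  | _, _ => False

def Gadj {m n : ℕ} (E : Set (Fin m × Fin n)) :
    Fin m ⊕ Fin n → Fin m ⊕ Fin n → Prop
  | .inl i, .inr j => (i, j) ∈ E
  | .inr j, .inl i => (i, j) ∈ E
  | _, _ => False

lemma exists_sink {m n : ℕ} {E : Set (Fin m × Fin n)} {o : Fin m × Fin n → Bool}
    (h : GoodOrientation E o) (S : Finset (Fin m ⊕ Fin n)) (hS : S.Nonempty) :
    ∃ u ∈ S, ∀ w ∈ S, ¬ Rdir E o u w := by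
  by_contra hcon
  push Not at hcon
  let f : S → S := fun u => ⟨(hcon u.1 u.2).choose, (hcon u.1 u.2).choose_spec.1⟩
  have hf : ∀ u : S, Rdir E o u.1 (f u).1 := fun u => (hcon u.1 u.2).choose_spec.2
  let v : ℕ → Fin m ⊕ Fin n := fun t => (f^[t] ⟨hS.choose, hS.choose_spec⟩).1
  have hv : ∀ t, Rdir E o (v t) (v (t + 1)) := by
    intro t
    simp only [v, Function.iterate_succ_apply']
    exact hf _
  obtain ⟨k, i, j, hk, hi, hj, h1, h2⟩ := cycle_of_walk (Rdir E o) (by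
    rintro (a | a) (b | b) h <;> simp_all [Rdir]) v hv (by
    intro t ht
    have h1 := hv t
    have h2 := hv (t + 1)
    rw [show t + 1 + 1 = t + 2 from rfl, ht] at h2
    revert h1 h2
    rcases v t with a | a <;> rcases v (t + 1) with b | b <;> simp +contextual [Rdir])
  exact (h k i j ⟨hk, hi, hj, fun t => (h1 t).1, fun t => (h2 t).1⟩).1
    (Or.inl fun t => ⟨(h1 t).2, (h2 t).2⟩)

lemma exists_topo {m n : ℕ} {E : Set (Fin m × Fin n)} {o : Fin m × Fin n → Bool}
    (h : GoodOrientation E o) (d : ℕ) : ∀ S : Finset (Fin m ⊕ Fin n), S.card = d →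
    ∃ l : List (Fin m ⊕ Fin n), l.Nodup ∧ (∀ u, u ∈ l ↔ u ∈ S) ∧
      l.Pairwise (fun u w => ¬ Rdir E o u w) := by
  induction d with
  | zero =>
    intro S hS
    rw [Finset.card_eq_zero] at hS
    exact ⟨[], by simp, by simp [hS], by simp⟩
  | succ d ih =>
    intro S hS
    obtain ⟨u, hu, hsink⟩ := exists_sink h S (Finset.card_pos.1 (by omega))
    obtain ⟨l, hnd, hmem, hp⟩ := ih (S.erase u) (by rw [Finset.card_erase_of_mem hu]; omega)
    refine ⟨u :: l, ?_, ?_, ?_⟩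
    · rw [List.nodup_cons]
      exact ⟨by rw [hmem]; simp, hnd⟩
    · intro w
      rw [List.mem_cons, hmem, Finset.mem_erase]
      constructor
      · rintro (rfl | ⟨_, h⟩) <;> assumption
      · intro hw
        by_cases hwu : w = u
        · exact Or.inl hwu
        · exact Or.inr ⟨hwu, hw⟩
    · rw [List.pairwise_cons]
      refine ⟨fun w hw => hsink w ?_, hp⟩
      rw [hmem] at hw
      exact Finset.mem_of_mem_erase hw

lemma HC_sums {k : Type*} [Field k] {V : Type*} [Fintype V] (R : V → V → Prop) (N : V → V → k)
    (hN : ∀ u w, N u w ≠ 0 → u ≠ w ∧ (R u w ∨ R w u)) (l : List V)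
    (hp : l.Pairwise (fun u w => ¬ R u w)) (h : HC N l) :
    ∀ u ∈ l, (∑ w, if w ∈ l ∧ R w u then N u w else 0) = 0 := by
  induction l with
  | nil => simp
  | cons a l ih =>
    rw [List.pairwise_cons] at hp
    intro u hu
    by_cases hua : u = a
    · subst hua
      refine Eq.trans ?_ h.1
      apply Finset.sum_congr rfl
      intro w _
      by_cases h0 : N u w = 0
      · simp [h0]
      · obtain ⟨h1, h2⟩ := hN u w h0
        by_cases hw : w ∈ l
        · have := hp.1 w hw
          have h3 : R w u := by tauto
          simp [hw, h3]
        · simp [hw, Ne.symm h1]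
    · have hul : u ∈ l := by simpa [hua] using hu
      refine Eq.trans ?_ (ih hp.2 h.2 u hul)
      apply Finset.sum_congr rfl
      intro w _
      by_cases hw : w = a
      · subst hw
        have := hp.1 u hul
        simp [this]
      · simp [hw]

lemma Gadj_dir {m n : ℕ} {E : Set (Fin m × Fin n)} (o : Fin m × Fin n → Bool)
    (u w : Fin m ⊕ Fin n) (h : Gadj E u w) : u ≠ w ∧ (Rdir E o u w ∨ Rdir E o w u) := by
  rcases u with a | a <;> rcases w with b | b <;> simp_all [Gadj, Rdir]

lemma Gadj_asymm {m n : ℕ} {E : Set (Fin m × Fin n)} (o : Fin m × Fin n → Bool)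
    (u w : Fin m ⊕ Fin n) (h : Rdir E o u w) : ¬ Rdir E o w u := by
  rcases u with a | a <;> rcases w with b | b <;> simp_all [Rdir]

lemma Gadj_SB {m n : ℕ} {E : Set (Fin m × Fin n)} (o : Fin m × Fin n → Bool)
    (u w : Fin m ⊕ Fin n) (h : Gadj E u w) : ∃ β, SB E o β u w := by
  rcases u with a | a <;> rcases w with b | b <;> simp_all [Gadj, SB]

lemma SB_symm {m n : ℕ} {E : Set (Fin m × Fin n)} {o : Fin m × Fin n → Bool} {β : Bool}
    (u w : Fin m ⊕ Fin n) (h : SB E o β u w) : SB E o β w u := by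
  rcases u with a | a <;> rcases w with b | b <;> simp_all [SB]

lemma SB_left {m n : ℕ} {E : Set (Fin m × Fin n)} {o : Fin m × Fin n → Bool} {β : Bool}
    (u w : Fin m ⊕ Fin n) (h : SB E o β u w) : u.isLeft = !w.isLeft := by
  rcases u with a | a <;> rcases w with b | b <;> simp_all [SB]

lemma good_to_zero {k : Type*} [Field k] {m n : ℕ} {E : Set (Fin m × Fin n)}
    {o : Fin m × Fin n → Bool} (h : GoodOrientation E o) (l : List (Fin m ⊕ Fin n))
    (hall : ∀ u, u ∈ l) (hp : l.Pairwise (fun u w => ¬ Rdir E o u w))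
    (z : Fin m ⊕ Fin n → k) (c : k) (N : Fin m ⊕ Fin n → Fin m ⊕ Fin n → k)
    (hC : Cond (Gadj E) z l c N) : N = 0 := by
  obtain ⟨hsym, hsupp, hrow, hHC, -⟩ := hC
  have hin : ∀ u, (∑ w, if Rdir E o w u then N u w else 0) = 0 := by
    intro u
    have := HC_sums (Rdir E o) N (by
      intro u w h0
      have hG : Gadj E u w := by
        by_contra hG
        exact h0 (hsupp u w hG)
      exact Gadj_dir o u w hG) l hp hHC u (hall u)
    simpa [hall] using this
  have hout : ∀ u, (∑ w, if Rdir E o u w then N u w else 0) = 0 := by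
    intro u
    have h1 := hrow u
    have h2 : (∑ w, N u w) = (∑ w, if Rdir E o u w then N u w else 0) +
        ∑ w, if Rdir E o w u then N u w else 0 := by
      rw [← Finset.sum_add_distrib]
      apply Finset.sum_congr rfl
      intro w _
      by_cases hG : Gadj E u w
      · rcases (Gadj_dir o u w hG).2 with h3 | h3
        · rw [if_pos h3, if_neg (Gadj_asymm o _ _ h3), add_zero]
        · rw [if_pos h3, if_neg (Gadj_asymm o _ _ h3), zero_add]
      · simp [hsupp u w hG]
    rw [h2, hin u, add_zero] at h1
    exact h1
  have hSB : ∀ β u, (∑ w, if SB E o β u w then N u w else 0) = 0 := by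
    intro β u
    rcases u with a | a <;> cases β
    · refine Eq.trans ?_ (hin (.inl a))
      exact Finset.sum_congr rfl fun w _ => if_congr (by rcases w with b | b <;> simp [SB, Rdir]) rfl rfl
    · refine Eq.trans ?_ (hout (.inl a))
      exact Finset.sum_congr rfl fun w _ => if_congr (by rcases w with b | b <;> simp [SB, Rdir]) rfl rfl
    · refine Eq.trans ?_ (hout (.inr a))
      exact Finset.sum_congr rfl fun w _ => if_congr (by rcases w with b | b <;> simp [SB, Rdir]) rfl rfl
    · refine Eq.trans ?_ (hin (.inr a))
      exact Finset.sum_congr rfl fun w _ => if_congr (by rcases w with b | b <;> simp [SB, Rdir]) rfl rfl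
  by_contra hN0
  obtain ⟨u0, w0, h0⟩ : ∃ u w, N u w ≠ 0 := by
    by_contra hcon
    push Not at hcon
    exact hN0 (funext fun u => funext fun w => hcon u w)
  obtain ⟨β, hβ⟩ : ∃ β, SB E o β u0 w0 := by
    have hG : Gadj E u0 w0 := by
      by_contra hG
      exact h0 (hsupp u0 w0 hG)
    exact Gadj_SB o _ _ hG
  let D := {x : (Fin m ⊕ Fin n) × (Fin m ⊕ Fin n) // SB E o β x.1 x.2 ∧ N x.1 x.2 ≠ 0}
  have hsymSB : ∀ u w, SB E o β u w → SB E o β w u := SB_symm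
  have hnext : ∀ x : D, ∃ w, w ≠ x.1.1 ∧ SB E o β x.1.2 w ∧ N x.1.2 w ≠ 0 := by
    rintro ⟨⟨u, w⟩, h1, h2⟩
    by_contra hcon
    push Not at hcon
    have h3 := hSB β w
    rw [Finset.sum_eq_single u] at h3
    · rw [if_pos (hsymSB _ _ h1), hsym] at h3
      exact h2 h3
    · intro w' _ hw'
      by_cases h4 : SB E o β w w'
      · simp [h4, hcon w' hw' h4]
      · simp [h4]
    · simp
  let f : D → D := fun x => ⟨(x.1.2, (hnext x).choose), (hnext x).choose_spec.2⟩
  let D0 : D := ⟨(u0, w0), hβ, h0⟩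
  let v : ℕ → Fin m ⊕ Fin n := fun t => (f^[t] D0).1.1
  have hv1 : ∀ t, v (t + 1) = (f^[t] D0).1.2 := by
    intro t
    simp only [v, Function.iterate_succ_apply']
    rfl
  obtain ⟨k, i, j, hk, hi, hj, h1, h2⟩ := cycle_of_walk (SB E o β) SB_left v (by
    intro t
    rw [hv1]
    exact (f^[t] D0).2.1) (by
    intro t
    rw [show t + 2 = (t + 1) + 1 from rfl, hv1, Function.iterate_succ_apply']
    exact (hnext (f^[t] D0)).choose_spec.1)
  refine (h k i j ⟨hk, hi, hj, fun t => (h1 t).1, fun t => (h2 t).1⟩).2 fun t => ⟨?_, ?_⟩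
  · rw [(h1 t).2, (h2 t).2]
  · have := (h2 (t - 1)).2
    rw [sub_add_cancel] at this
    rw [(h1 t).2, this]

lemma exists_rank {k V : Type*} [Field k] [Fintype V] (l : List V) (hnd : l.Nodup) :
    ∃ ρ : V → ℕ, (∀ u ∈ l, ρ u < l.length) ∧ (∀ u ∈ l, ∀ w ∈ l, ρ u = ρ w → u = w) ∧
      ∀ N : V → V → k, (∀ u ∈ l, (∑ w, if w ∈ l ∧ ρ w < ρ u then N u w else 0) = 0) → HC N l := by
  induction l with
  | nil => exact ⟨fun _ => 0, by simp, by simp, fun _ _ => trivial⟩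
  | cons a l ih =>
    obtain ⟨ha, hnd'⟩ := List.nodup_cons.1 hnd
    obtain ⟨ρ, h1, h2, h3⟩ := ih hnd'
    have hne : ∀ u ∈ l, u ≠ a := by rintro u hu rfl; exact ha hu
    refine ⟨fun u => if u = a then l.length else ρ u, ?_, ?_, ?_⟩
    · intro u hu
      by_cases hua : u = a
      · simp [hua]
      · have := h1 u (by simpa [hua] using hu)
        simp [hua]; omega
    · intro u hu w hw huw
      by_cases hua : u = a <;> by_cases hwa : w = a
      · rw [hua, hwa]
      · have := h1 w (by simpa [hwa] using hw)
        simp [hua, hwa] at huw; omega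
      · have := h1 u (by simpa [hua] using hu)
        simp [hua, hwa] at huw; omega
      · simp [hua, hwa] at huw
        exact h2 u (by simpa [hua] using hu) w (by simpa [hwa] using hw) huw
    · intro N hN
      refine ⟨?_, h3 N ?_⟩
      · refine Eq.trans ?_ (hN a (by simp))
        apply Finset.sum_congr rfl
        intro w _
        by_cases hw : w ∈ l
        · simp [hw, hne w hw, h1 w hw]
        · by_cases hwa : w = a <;> simp [hw, hwa, ha]
      · intro u hu
        refine Eq.trans ?_ (hN u (List.mem_cons_of_mem _ hu))
        apply Finset.sum_congr rfl
        intro w _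
        have hu1 := h1 u hu
        by_cases hwa : w = a
        · subst hwa
          have : ¬ l.length < ρ u := by omega
          simp [ha, hne u hu, this]
        · simp [hwa, hne u hu]

def cycA (k : Type*) [Field k] {m n r : ℕ} [NeZero r] (i : ZMod r → Fin m) (j : ZMod r → Fin n)
    (a : Fin m) (b : Fin n) : k :=
  ∑ t, ((if a = i t ∧ b = j t then 1 else 0) - if a = i t ∧ b = j (t - 1) then 1 else 0)

def cycN {k : Type*} [Field k] {m n : ℕ} (A : Fin m → Fin n → k) :
    Fin m ⊕ Fin n → Fin m ⊕ Fin n → k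
  | .inl i, .inr j => A i j
  | .inr j, .inl i => A i j
  | _, _ => 0

lemma cycA_row {k : Type*} [Field k] {m n r : ℕ} [NeZero r] (i : ZMod r → Fin m)
    (j : ZMod r → Fin n) (a : Fin m) (P : Fin n → Prop) :
    (∑ b, if P b then cycA k i j a b else 0) =
      ∑ t, if a = i t then ((if P (j t) then (1 : k) else 0) -
        if P (j (t - 1)) then 1 else 0) else 0 := by
  have h1 : ∀ b, (if P b then cycA k i j a b else 0) = ∑ t, (if P b then
      ((if a = i t ∧ b = j t then (1 : k) else 0) -
        if a = i t ∧ b = j (t - 1) then 1 else 0) else 0) := by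
    intro b
    split_ifs
    · rfl
    · simp
  simp_rw [h1]
  rw [Finset.sum_comm]
  apply Finset.sum_congr rfl
  intro t _
  by_cases ha : a = i t
  · simp only [ha, true_and, if_true]
    have : ∀ (b0 : Fin n), (∑ b, if P b then (if b = b0 then (1 : k) else 0) else 0) =
        if P b0 then 1 else 0 := by
      intro b0
      rw [Finset.sum_eq_single b0]
      · simp
      · intro b _ hb
        simp [hb]
      · simp
    rw [← this, ← this, ← Finset.sum_sub_distrib]
    apply Finset.sum_congr rfl
    intro b _
    split_ifs <;> simp
  · simp [ha]

lemma cycA_col {k : Type*} [Field k] {m n r : ℕ} [NeZero r] (i : ZMod r → Fin m)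
    (j : ZMod r → Fin n) (b : Fin n) (P : Fin m → Prop) :
    (∑ a, if P a then cycA k i j a b else 0) =
      ∑ t, if b = j t then ((if P (i t) then (1 : k) else 0) -
        if P (i (t + 1)) then 1 else 0) else 0 := by
  have h0 : ∀ a, cycA k i j a b = ∑ t, ((if a = i t ∧ b = j t then (1 : k) else 0) -
      if a = i (t + 1) ∧ b = j t then 1 else 0) := by
    intro a
    unfold cycA
    rw [Finset.sum_sub_distrib, Finset.sum_sub_distrib]
    congr 1
    rw [← Equiv.sum_comp (Equiv.addRight (1 : ZMod r))]
    simp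
  have h1 : ∀ a, (if P a then cycA k i j a b else 0) = ∑ t, (if P a then
      ((if a = i t ∧ b = j t then (1 : k) else 0) -
        if a = i (t + 1) ∧ b = j t then 1 else 0) else 0) := by
    intro a
    rw [h0]
    split_ifs
    · rfl
    · simp
  simp_rw [h1]
  rw [Finset.sum_comm]
  apply Finset.sum_congr rfl
  intro t _
  by_cases ha : b = j t
  · simp only [ha, and_true, if_true]
    have : ∀ (b0 : Fin m), (∑ b, if P b then (if b = b0 then (1 : k) else 0) else 0) =
        if P b0 then 1 else 0 := by
      intro b0
      rw [Finset.sum_eq_single b0]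
      · simp
      · intro b _ hb
        simp [hb]
      · simp
    rw [← this, ← this, ← Finset.sum_sub_distrib]
    apply Finset.sum_congr rfl
    intro b _
    split_ifs <;> simp
  · simp [ha]

lemma zero_to_good {k : Type*} [Field k] {m n : ℕ} {E : Set (Fin m × Fin n)}
    (l : List (Fin m ⊕ Fin n)) (hnd : l.Nodup) (hall : ∀ u, u ∈ l)
    (z : Fin m ⊕ Fin n → k) (c : k) (h : ∀ N, Cond (Gadj E) z l c N → N = 0) :
    ∃ o : Fin m × Fin n → Bool, GoodOrientation E o := by
  obtain ⟨ρ, -, hinj, hHC⟩ := exists_rank (k := k) l hnd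
  refine ⟨fun e => decide (ρ (.inl e.1) < ρ (.inr e.2)), ?_⟩
  rintro r i j ⟨hr, hi, hj, hE1, hE2⟩
  have : NeZero r := ⟨by omega⟩
  have : Fact (1 < r) := ⟨by omega⟩
  constructor
  · rintro (hd | hd)
    · obtain ⟨t, ht⟩ := Finite.exists_max (fun t => ρ (.inl (i t)))
      have h1 := ht (t + 1)
      have h2 := hd t
      simp at h2
      omega
    · obtain ⟨t, ht⟩ := Finite.exists_min (fun t => ρ (.inl (i t)))
      have h1 := ht (t + 1)
      have h2 := hd t
      simp at h2
      omega
  · intro hd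
    simp only [decide_eq_decide] at hd
    have hne : ∀ a b, ρ (Sum.inl a) ≠ ρ (Sum.inr b) := by
      intro a b hab
      have := hinj _ (hall _) _ (hall _) hab
      simp at this
    have hz := h (cycN (cycA k i j)) ⟨?_, ?_, ?_, ?_, ?_⟩
    · have h00 : cycN (cycA k i j) (.inl (i 0)) (.inr (j 0)) = 0 := by rw [hz]; rfl
      have h1 : cycA k i j (i 0) (j 0) = 1 := by
        unfold cycA
        rw [Finset.sum_eq_single 0]
        · have : j 0 ≠ j (0 - 1) := by
            intro h
            have := hj h
            simp at this
          simp [-zero_sub, this]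
        · intro t _ ht
          have : i 0 ≠ i t := fun h => ht (hi h).symm
          simp [this]
        · simp
      rw [show cycN (cycA k i j) (.inl (i 0)) (.inr (j 0)) = cycA k i j (i 0) (j 0) from rfl,
        h1] at h00
      exact one_ne_zero h00
    · rintro (a | a) (b | b) <;> rfl
    · have key : ∀ a b, (a, b) ∉ E → cycA k i j a b = 0 := by
        intro a b hab
        unfold cycA
        apply Finset.sum_eq_zero
        intro t _
        rw [if_neg, if_neg, sub_zero]
        · rintro ⟨rfl, rfl⟩
          have := hE2 (t - 1)
          rw [sub_add_cancel] at this
          exact hab this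
        · rintro ⟨rfl, rfl⟩
          exact hab (hE1 t)
      rintro (a | a) (b | b) hG
      · rfl
      · exact key a b hG
      · exact key b a hG
      · rfl
    · rintro (a | a)
      · rw [Fintype.sum_sum_type]
        have := cycA_row (k := k) i j a (fun _ => True)
        simpa [cycN] using this
      · rw [Fintype.sum_sum_type]
        have := cycA_col (k := k) i j a (fun _ => True)
        simpa [cycN] using this
    · apply hHC
      rintro (a | a) -
      · rw [Fintype.sum_sum_type]
        have := cycA_row (k := k) i j a (fun b => ρ (.inr b) < ρ (.inl a))
        simp only [cycN, hall, true_and, ite_self, Finset.sum_const_zero, zero_add]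
        refine Eq.trans ?_ (this.trans ?_)
        · exact Finset.sum_congr rfl fun x _ => by split_ifs <;> rfl
        apply Finset.sum_eq_zero
        intro t _
        split_ifs with h1 h2 h3 h3
        · simp
        · have h4 := (hd t).2
          subst h1
          have h5 := hne (i t) (j (t - 1))
          omega
        · have h4 := (hd t).2
          subst h1
          have h5 := hne (i t) (j t)
          omega
        · simp
        · rfl
      · rw [Fintype.sum_sum_type]
        have := cycA_col (k := k) i j a (fun b => ρ (.inl b) < ρ (.inr a))
        simp only [cycN, hall, true_and, ite_self, Finset.sum_const_zero, add_zero]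
        refine Eq.trans ?_ (this.trans ?_)
        · exact Finset.sum_congr rfl fun x _ => by split_ifs <;> rfl
        apply Finset.sum_eq_zero
        intro t _
        split_ifs with h1 h2 h3 h3
        · simp
        · have h4 := (hd t).1
          subst h1
          omega
        · have h4 := (hd t).1
          subst h1
          omega
        · simp
        · rfl
    · intro u hu
      exact absurd (hall u) hu

lemma ker_family {L : Type*} [Field L] {m p q : ℕ} (hpq : p + q ≤ m) (A : Fin m → Fin q → L) :
    ∃ a : Fin m → Fin p → L, (∀ t k, ∑ i, a i t * A i k = 0) ∧
      ∀ g : Fin p → L, (∀ i, ∑ t, a i t * g t = 0) → g = 0 := by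
  let φ : (Fin m → L) →ₗ[L] (Fin q → L) := Fintype.linearCombination L A
  have h1 := LinearMap.finrank_range_add_finrank_ker φ
  have h2 : Module.finrank L φ.range ≤ q := by
    have := Submodule.finrank_le φ.range
    simpa using this
  rw [Module.finrank_fin_fun] at h1
  obtain ⟨f, hf⟩ := exists_linearIndependent_of_le_finrank (R := L) (M := φ.ker) (n := p) (by omega)
  refine ⟨fun i t => (f t).1 i, ?_, ?_⟩
  · intro t k
    have := (f t).2
    rw [LinearMap.mem_ker] at this
    have := congrFun this k
    simp only [φ, Fintype.linearCombination_apply, Finset.sum_apply, Pi.smul_apply, smul_eq_mul,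
      Pi.zero_apply] at this
    exact this
  · intro g hg
    have := Fintype.linearIndependent_iff.1 hf g (by
      apply Subtype.ext
      ext i
      have := hg i
      simp only [mul_comm] at this
      simpa using this)
    exact funext this

def Gen2 {L : Type*} [Field L] {m s : ℕ} (X : Fin m → Fin s → L) : Prop :=
  (∀ (a : Fin m → L) (i i' : Fin m), i ≠ i' → a i = 0 → a i' = 0 →
    (∀ k, ∑ l, a l * X l k = 0) → a = 0) ∧
  ∀ g : Fin s → L, (∀ i, ∑ k, X i k * g k = 0) → g = 0

lemma lemA {L : Type*} [Field L] [Infinite L] {m : ℕ} (hm : 2 ≤ m) (X : Fin m → Fin (m - 2) → L)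
    (hX : Gen2 X) : ∃ d x : Fin m → L, (∀ i, d i ≠ 0) ∧ Function.Injective x ∧
      ∀ f : Fin m → L, ∑ i, d i * f i = 0 → ∑ i, d i * x i * f i = 0 →
        ∃ g : Fin (m - 2) → L, ∀ i, f i = ∑ k, X i k * g k := by
  obtain ⟨a, ha, hli⟩ := ker_family (p := 2) (by omega) X
  have hdet : ∀ i i', i ≠ i' → a i 0 * a i' 1 - a i 1 * a i' 0 ≠ 0 := by
    intro i i' hii h0
    have : Matrix.det !![a i 0, a i 1; a i' 0, a i' 1] = 0 := by
      rw [Matrix.det_fin_two_of]; exact h0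
    obtain ⟨v, hv0, hv⟩ := Matrix.exists_mulVec_eq_zero_iff.2 this
    apply hv0
    apply hli
    have h1 := congrFun hv 0
    have h2 := congrFun hv 1
    simp [Matrix.mulVec, dotProduct, Fin.sum_univ_two] at h1 h2
    have := hX.1 (fun l => ∑ t, a l t * v t) i i' hii (by simpa [Fin.sum_univ_two] using h1)
      (by simpa [Fin.sum_univ_two] using h2) (by
        intro k
        have e0 := ha 0 k
        have e1 := ha 1 k
        have : ∀ l, (∑ t, a l t * v t) * X l k = v 0 * (a l 0 * X l k) + v 1 * (a l 1 * X l k) := by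
          intro l; rw [Fin.sum_univ_two]; ring
        simp_rw [this]
        rw [Finset.sum_add_distrib, ← Finset.mul_sum, ← Finset.mul_sum, e0, e1]
        simp)
    intro i
    exact congrFun this i
  obtain ⟨τ, hτ⟩ := Infinite.exists_notMem_finset
    (Finset.univ.image fun i : Fin m => - a i 0 / a i 1)
  have hd : ∀ i, a i 0 + τ * a i 1 ≠ 0 := by
    intro i h0
    by_cases h1 : a i 1 = 0
    · have : ∃ i', i ≠ i' := by
        by_cases hi : i = ⟨0, by omega⟩
        · exact ⟨⟨1, by omega⟩, by rw [hi]; simp⟩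
        · exact ⟨_, hi⟩
      obtain ⟨i', hi'⟩ := this
      apply hdet i i' hi'
      have h2 : a i 0 = 0 := by simpa [h1] using h0
      simp [h1, h2]
    · apply hτ
      rw [Finset.mem_image]
      refine ⟨i, Finset.mem_univ _, ?_⟩
      rw [div_eq_iff h1]
      linear_combination -h0
  refine ⟨fun i => a i 0 + τ * a i 1, fun i => a i 1 / (a i 0 + τ * a i 1), hd, ?_, ?_⟩
  · intro i i' h
    by_contra hne
    apply hdet i i' hne
    simp only at h
    rw [div_eq_div_iff (hd i) (hd i')] at h
    linear_combination -h
  · intro f h1 h2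
    have h2' : ∑ i, a i 1 * f i = 0 := by
      rw [← h2]
      apply Finset.sum_congr rfl
      intro i _
      rw [mul_div_cancel₀ _ (hd i)]
    have h1' : ∑ i, a i 0 * f i = 0 := by
      have : ∑ i, (a i 0 + τ * a i 1) * f i = ∑ i, a i 0 * f i + τ * ∑ i, a i 1 * f i := by
        rw [Finset.mul_sum, ← Finset.sum_add_distrib]
        exact Finset.sum_congr rfl fun i _ => by ring
      rw [this, h2'] at h1
      simpa using h1
    let ψ : (Fin (m - 2) → L) →ₗ[L] (Fin m → L) := Matrix.mulVecLin (Matrix.of X)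
    by_contra hcon
    have hnot : f ∉ ψ.range := by
      rintro ⟨g, hg⟩
      apply hcon
      refine ⟨g, fun i => ?_⟩
      rw [← hg]
      rfl
    obtain ⟨φ, hφ, hle⟩ := Submodule.exists_le_ker_of_notMem hnot
    apply hφ
    let b : Fin m → L := fun i => φ (Pi.single i 1)
    have hb : ∀ f : Fin m → L, φ f = ∑ i, b i * f i := by
      intro f
      rw [LinearMap.pi_apply_eq_sum_univ φ f]
      apply Finset.sum_congr rfl
      intro i _
      rw [smul_eq_mul, mul_comm]
      congr 2
      ext j
      simp [Pi.single_apply, eq_comm]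
    have hbX : ∀ k, ∑ l, b l * X l k = 0 := by
      intro k
      have : φ (ψ (Pi.single k 1)) = 0 := hle ⟨_, rfl⟩
      rw [hb] at this
      rw [← this]
      apply Finset.sum_congr rfl
      intro i _
      simp [ψ, Matrix.mulVec, dotProduct, Pi.single_apply]
    have hne : (⟨0, by omega⟩ : Fin m) ≠ ⟨1, by omega⟩ := by simp
    have hD := hdet _ _ hne
    generalize (⟨0, by omega⟩ : Fin m) = i at hne hD
    generalize (⟨1, by omega⟩ : Fin m) = i' at hne hD
    set D := a i 0 * a i' 1 - a i 1 * a i' 0 with hDdef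
    have hz := hX.1 (fun l => D * b l - (b i * a i' 1 - b i' * a i 1) * a l 0 -
        (b i' * a i 0 - b i * a i' 0) * a l 1) i i' hne (by simp only [hDdef]; ring)
        (by simp only [hDdef]; ring) (by
      intro k
      have e0 := ha 0 k
      have e1 := ha 1 k
      have e2 := hbX k
      have : ∀ l, (D * b l - (b i * a i' 1 - b i' * a i 1) * a l 0 -
        (b i' * a i 0 - b i * a i' 0) * a l 1) * X l k = D * (b l * X l k) -
          (b i * a i' 1 - b i' * a i 1) * (a l 0 * X l k) -
          (b i' * a i 0 - b i * a i' 0) * (a l 1 * X l k) := by intro l; ring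
      simp_rw [this]
      rw [Finset.sum_sub_distrib, Finset.sum_sub_distrib, ← Finset.mul_sum, ← Finset.mul_sum,
        ← Finset.mul_sum, e0, e1, e2]
      simp)
    have : D * φ f = 0 := by
      rw [hb, Finset.mul_sum]
      have : ∀ l, D * (b l * f l) = (b i * a i' 1 - b i' * a i 1) * (a l 0 * f l) +
          (b i' * a i 0 - b i * a i' 0) * (a l 1 * f l) := by
        intro l
        have := congrFun hz l
        simp only [Pi.zero_apply] at this
        linear_combination f l * this
      simp_rw [this]
      rw [Finset.sum_add_distrib, ← Finset.mul_sum, ← Finset.mul_sum, h1', h2']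
      simp
    exact (mul_eq_zero.1 this).resolve_left hD

lemma gen2_generic {F L τ : Type*} [Field F] [Field L] {m : ℕ} (hm : 2 ≤ m)
    (v : Fin m → Fin (m - 2) → τ) (hv : ∀ i k i' k', v i k = v i' k' → i = i' ∧ k = k')
    (φ : MvPolynomial τ F →+* L) (hφ : Function.Injective φ) :
    Gen2 (fun i k => φ (MvPolynomial.X (v i k))) := by
  have key : ∀ σ : Fin (m - 2) → Fin m, Function.Injective σ →
      Matrix.det (Matrix.of fun t k => φ (MvPolynomial.X (v (σ t) k))) ≠ 0 := by
    intro σ hσ h0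
    have h1 : φ (Matrix.det (Matrix.of fun t k => (MvPolynomial.X (v (σ t) k) :
        MvPolynomial τ F))) = 0 := by
      rw [RingHom.map_det, ← h0]
      congr 1
    have h2 := hφ (h1.trans (map_zero φ).symm)
    have h3 := congrArg (MvPolynomial.eval (fun x => if ∃ k, x = v (σ k) k then (1 : F) else 0)) h2
    rw [RingHom.map_det, map_zero] at h3
    have h4 : (MvPolynomial.eval (fun x => if ∃ k, x = v (σ k) k then (1 : F) else 0)).mapMatrix
        (Matrix.of fun t k => (MvPolynomial.X (v (σ t) k) : MvPolynomial τ F)) = 1 := by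
      ext t k
      simp only [RingHom.mapMatrix_apply, Matrix.map_apply, Matrix.of_apply, MvPolynomial.eval_X,
        Matrix.one_apply]
      apply if_congr _ rfl rfl
      constructor
      · rintro ⟨k', hk'⟩
        obtain ⟨e1, e2⟩ := hv _ _ _ _ hk'
        rw [e2]; exact hσ e1
      · rintro rfl
        exact ⟨t, rfl⟩
    rw [h4] at h3
    simp at h3
  have hσ : ∀ i i' : Fin m, i ≠ i' → ∃ σ : Fin (m - 2) → Fin m, Function.Injective σ ∧
      (∀ t, σ t ≠ i ∧ σ t ≠ i') ∧ ∀ l, l ≠ i → l ≠ i' → ∃ t, σ t = l := by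
    intro i i' hne
    have hc : (({i, i'} : Finset (Fin m))ᶜ).card = m - 2 := by
      rw [Finset.card_compl, Finset.card_pair hne, Fintype.card_fin]
    let e := Finset.equivFinOfCardEq hc
    refine ⟨fun t => (e.symm t).1, ?_, ?_, ?_⟩
    · intro t t' h
      exact e.symm.injective (Subtype.ext h)
    · intro t
      have := (e.symm t).2
      simpa using this
    · intro l h1 h2
      exact ⟨e ⟨l, by simp [h1, h2]⟩, by simp⟩
  constructor
  · intro a i i' hne h1 h2 h
    obtain ⟨σ, hinj, hav, hsur⟩ := hσ i i' hne
    have h3 := Matrix.eq_zero_of_vecMul_eq_zero (key σ hinj) (v := fun t => a (σ t)) (by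
      ext k
      rw [Pi.zero_apply, ← h k]
      simp only [Matrix.vecMul, dotProduct, Matrix.of_apply]
      refine (Finset.sum_of_injOn σ hinj.injOn (by simp) ?_ (by simp))
      intro l _ hl
      by_cases hli : l = i
      · simp [hli, h1]
      by_cases hli' : l = i'
      · simp [hli', h2]
      obtain ⟨t, ht⟩ := hsur l hli hli'
      exact absurd ⟨t, by simp, ht⟩ hl)
    funext l
    by_cases hli : l = i
    · simp [hli, h1]
    by_cases hli' : l = i'
    · simp [hli', h2]
    obtain ⟨t, rfl⟩ := hsur l hli hli'
    exact congrFun h3 t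
  · intro g hg
    obtain ⟨σ, hinj, -, -⟩ := hσ ⟨0, by omega⟩ ⟨1, by omega⟩ (by simp)
    apply Matrix.eq_zero_of_mulVec_eq_zero (key σ hinj)
    ext t
    exact hg (σ t)

lemma span_iff_minor {K S ι : Type*} [Field K] [Fintype S] [DecidableEq S] (w : ι → S → K) :
    Submodule.span K (Set.range w) = ⊤ ↔
      ∃ a : S → ι, Matrix.det (Matrix.of fun t s => w (a t) s) ≠ 0 := by
  constructor
  · intro h
    obtain ⟨κ, a, ha, hsp, hli⟩ := exists_linearIndependent' K w
    let b := Module.Basis.mk hli (by rw [hsp, h])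
    have e : κ ≃ S := b.indexEquiv (Pi.basisFun K S)
    refine ⟨fun s => a (e.symm s), ?_⟩
    have h1 : LinearIndependent K ((w ∘ a) ∘ e.symm) := hli.comp _ e.symm.injective
    have h2 := (Matrix.linearIndependent_rows_iff_isUnit
      (A := Matrix.of fun t s => w (a (e.symm t)) s)).1 h1
    rw [Matrix.isUnit_iff_isUnit_det] at h2
    exact h2.ne_zero
  · rintro ⟨a, ha⟩
    have h2 := (Matrix.linearIndependent_rows_iff_isUnit
      (A := Matrix.of fun t s => w (a t) s)).2 (by
        rw [Matrix.isUnit_iff_isUnit_det]; exact ha.isUnit)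
    have h3 := h2.span_eq_top_of_card_eq_finrank' (by simp)
    rw [eq_top_iff, ← h3]
    apply Submodule.span_mono
    rintro _ ⟨t, rfl⟩
    exact ⟨a t, rfl⟩

lemma span_of_dual {K S ι : Type*} [Field K] [Fintype S] (w : ι → S → K)
    (h : ∀ B : S → K, (∀ e, ∑ s, w e s * B s = 0) → B = 0) :
    Submodule.span K (Set.range w) = ⊤ := by
  by_contra hne
  obtain ⟨f, hf, hle⟩ := Submodule.exists_le_ker_of_lt_top _ (lt_top_iff_ne_top.2 hne)
  apply hf
  have hB := h (fun s => f (Pi.single s 1)) (by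
    intro e
    have : f (w e) = 0 := hle (Submodule.subset_span ⟨e, rfl⟩)
    rw [LinearMap.pi_apply_eq_sum_univ f] at this
    rw [← this]
    apply Finset.sum_congr rfl
    intro i _
    rw [smul_eq_mul]
    congr 2
    ext j
    simp [Pi.single_apply, eq_comm])
  ext s
  simpa using congrFun hB s

lemma cond_nil_iff {L : Type*} [Field L] {m n : ℕ} {E : Set (Fin m × Fin n)}
    {z : Fin m ⊕ Fin n → L} {c : L} {N : Fin m ⊕ Fin n → Fin m ⊕ Fin n → L}
    (h : Cond (Gadj E) z [] c N) (hc : ∀ u, z u ≠ c) (u : Fin m ⊕ Fin n) :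
    ∑ w, N u w / (z u - z w) = 0 := by
  have := h.2.2.2.2 u (by simp)
  simp only [List.not_mem_nil, if_false, Finset.sum_const_zero, zero_add] at this
  exact (mul_eq_zero.1 this).resolve_left (sub_ne_zero.2 (hc u))

lemma forward_alg {L : Type*} [Field L] [Infinite L] {m n : ℕ} (hm : 2 ≤ m) (hn : 2 ≤ n)
    {E : Set (Fin m × Fin n)} (X : Fin m → Fin (m - 2) → L) (Y : Fin n → Fin (n - 2) → L)
    (hX : Gen2 X) (hY : Gen2 Y)
    (hB : ∀ B : Fin (m - 2) × Fin (n - 2) → L,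
      (∀ e, e ∉ E → ∑ s, X e.1 s.1 * Y e.2 s.2 * B s = 0) → B = 0) :
    ∃ o : Fin m × Fin n → Bool, GoodOrientation E o := by
  obtain ⟨d, x, hd, hx, hdx⟩ := lemA hm X hX
  obtain ⟨e, y, he, hy, hey⟩ := lemA hn Y hY
  obtain ⟨τ, hτ⟩ := Infinite.exists_notMem_finset
    (Finset.univ.image fun p : Fin m × Fin n => y p.2 - x p.1)
  have hτ' : ∀ i j, x i + τ - y j ≠ 0 := by
    intro i j h0
    apply hτ
    rw [Finset.mem_image]
    exact ⟨(i, j), Finset.mem_univ _, by linear_combination -h0⟩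
  let z : Fin m ⊕ Fin n → L := Sum.elim (fun i => x i + τ) y
  have hz : Function.Injective z := by
    rintro (a | a) (b | b) h
    · rw [hx (add_right_cancel h)]
    · exact absurd (sub_eq_zero.2 h) (hτ' a b)
    · exact absurd (sub_eq_zero.2 h.symm) (hτ' b a)
    · rw [hy h]
  obtain ⟨c, hc⟩ := Infinite.exists_notMem_finset (Finset.univ.image z)
  have hc' : ∀ u, z u ≠ c := by
    intro u hu
    exact hc (Finset.mem_image.2 ⟨u, Finset.mem_univ _, hu⟩)
  obtain ⟨l, hnd, hall, c', hl⟩ := core_forward (Gadj E) z hz c (by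
    intro N hN
    have hdiv := cond_nil_iff hN hc'
    obtain ⟨hsym, hsupp, hrow, -, -⟩ := hN
    have hll : ∀ a b, N (.inl a) (.inl b) = 0 := fun a b => hsupp _ _ (fun h => h)
    have hrr : ∀ a b, N (.inr a) (.inr b) = 0 := fun a b => hsupp _ _ (fun h => h)
    let M : Fin m → Fin n → L := fun i j => N (.inl i) (.inr j) / (x i + τ - y j)
    have hNM : ∀ i j, N (.inl i) (.inr j) = M i j * (x i + τ - y j) := by
      intro i j
      exact (div_mul_cancel₀ _ (hτ' i j)).symm
    have r1 : ∀ i, ∑ j, M i j = 0 := by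
      intro i
      have := hdiv (.inl i)
      rw [Fintype.sum_sum_type] at this
      simpa [hll, z, M] using this
    have r2 : ∀ i, ∑ j, M i j * (x i + τ - y j) = 0 := by
      intro i
      have := hrow (.inl i)
      rw [Fintype.sum_sum_type] at this
      simpa [hll, hNM] using this
    have c1 : ∀ j, ∑ i, M i j = 0 := by
      intro j
      have := hdiv (.inr j)
      rw [Fintype.sum_sum_type] at this
      simp only [hrr, zero_div, Finset.sum_const_zero, add_zero] at this
      rw [← neg_eq_zero, ← Finset.sum_neg_distrib, ← this]
      apply Finset.sum_congr rfl
      intro i _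
      simp only [M, z, Sum.elim_inl, Sum.elim_inr]
      rw [hsym (.inr j), ← div_neg, neg_sub]
    have c2 : ∀ j, ∑ i, M i j * (x i + τ - y j) = 0 := by
      intro j
      have := hrow (.inr j)
      rw [Fintype.sum_sum_type] at this
      simp only [hrr, Finset.sum_const_zero, add_zero] at this
      rw [← this]
      apply Finset.sum_congr rfl
      intro i _
      rw [hsym (.inr j), hNM]
    have r3 : ∀ i, ∑ j, y j * M i j = 0 := by
      intro i
      have : ∑ j, y j * M i j = (x i + τ) * ∑ j, M i j - ∑ j, M i j * (x i + τ - y j) := by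
        rw [Finset.mul_sum, ← Finset.sum_sub_distrib]
        exact Finset.sum_congr rfl fun j _ => by ring
      rw [this, r1, r2]; simp
    have c3 : ∀ j, ∑ i, x i * M i j = 0 := by
      intro j
      have : ∑ i, x i * M i j = (y j - τ) * ∑ i, M i j + ∑ i, M i j * (x i + τ - y j) := by
        rw [Finset.mul_sum, ← Finset.sum_add_distrib]
        exact Finset.sum_congr rfl fun j _ => by ring
      rw [this, c1, c2]; simp
    let P : Fin m → Fin n → L := fun i j => M i j / (d i * e j)
    have hMP : ∀ i j, M i j = P i j * (d i * e j) := by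
      intro i j
      exact (div_mul_cancel₀ _ (mul_ne_zero (hd i) (he j))).symm
    have hg : ∀ j, ∃ g : Fin (m - 2) → L, ∀ i, P i j = ∑ k, X i k * g k := by
      intro j
      apply hdx
      · have : e j * ∑ i, d i * P i j = ∑ i, M i j := by
          rw [Finset.mul_sum]
          exact Finset.sum_congr rfl fun i _ => by rw [hMP]; ring
        rw [c1] at this
        exact (mul_eq_zero.1 this).resolve_left (he j)
      · have : e j * ∑ i, d i * x i * P i j = ∑ i, x i * M i j := by
          rw [Finset.mul_sum]
          exact Finset.sum_congr rfl fun i _ => by rw [hMP]; ring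
        rw [c3] at this
        exact (mul_eq_zero.1 this).resolve_left (he j)
    choose g hg using hg
    have g1 : ∀ k, ∑ j, e j * g j k = 0 := by
      intro k
      refine congrFun (hX.2 (fun k => ∑ j, e j * g j k) ?_) k
      intro i
      have h1 : d i * ∑ k, X i k * ∑ j, e j * g j k = ∑ j, M i j := by
        simp_rw [hMP, hg, Finset.mul_sum, Finset.sum_mul]
        rw [Finset.sum_comm]
        exact Finset.sum_congr rfl fun j _ => Finset.sum_congr rfl fun k _ => by ring
      rw [r1] at h1
      exact (mul_eq_zero.1 h1).resolve_left (hd i)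
    have g2 : ∀ k, ∑ j, e j * y j * g j k = 0 := by
      intro k
      refine congrFun (hX.2 (fun k => ∑ j, e j * y j * g j k) ?_) k
      intro i
      have h1 : d i * ∑ k, X i k * ∑ j, e j * y j * g j k = ∑ j, y j * M i j := by
        simp_rw [hMP, hg, Finset.mul_sum, Finset.sum_mul, Finset.mul_sum]
        rw [Finset.sum_comm]
        exact Finset.sum_congr rfl fun j _ => Finset.sum_congr rfl fun k _ => by ring
      rw [r3] at h1
      exact (mul_eq_zero.1 h1).resolve_left (hd i)
    have hb : ∀ k, ∃ b : Fin (n - 2) → L, ∀ j, g j k = ∑ l, Y j l * b l := fun k =>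
      hey _ (g1 k) (g2 k)
    choose b hb using hb
    have hP : ∀ i j, P i j = ∑ s : Fin (m - 2) × Fin (n - 2), X i s.1 * Y j s.2 * b s.1 s.2 := by
      intro i j
      rw [hg, Fintype.sum_prod_type]
      apply Finset.sum_congr rfl
      intro k _
      rw [hb, Finset.mul_sum]
      exact Finset.sum_congr rfl fun l _ => by ring
    have hb0 := hB (fun s => b s.1 s.2) (by
      rintro ⟨i, j⟩ hij
      have h0 : N (.inl i) (.inr j) = 0 := hsupp _ _ hij
      rw [← hP]
      simp [P, M, h0])
    have hP0 : ∀ i j, P i j = 0 := by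
      intro i j
      rw [hP]
      apply Finset.sum_eq_zero
      intro s _
      have := congrFun hb0 s
      simp only [Pi.zero_apply] at this
      rw [this, mul_zero]
    have hN0 : ∀ i j, N (.inl i) (.inr j) = 0 := by
      intro i j
      rw [hNM, hMP, hP0]; simp
    funext u w
    rcases u with a | a <;> rcases w with b | b
    · exact hll a b
    · exact hN0 a b
    · rw [hsym]; exact hN0 b a
    · exact hrr a b)
  exact zero_to_good l hnd hall z c' hl

lemma backward_alg (L : Type*) [Field L] [Infinite L] {m n : ℕ} (hm : 2 ≤ m) (hn : 2 ≤ n)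
    {E : Set (Fin m × Fin n)} {o : Fin m × Fin n → Bool} (ho : GoodOrientation E o) :
    ∃ (X : Fin m → Fin (m - 2) → L) (Y : Fin n → Fin (n - 2) → L),
    ∀ B : Fin (m - 2) × Fin (n - 2) → L,
      (∀ e, e ∉ E → ∑ s, X e.1 s.1 * Y e.2 s.2 * B s = 0) → B = 0 := by
  obtain ⟨l, hnd, hmem, hp⟩ := exists_topo ho _ Finset.univ rfl
  have hall : ∀ u, u ∈ l := fun u => (hmem u).2 (Finset.mem_univ u)
  let ε : Option (Fin m ⊕ Fin n) → L := fun u =>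
    Infinite.natEmbedding L (Fintype.equivFin (Option (Fin m ⊕ Fin n)) u).val
  have hε : Function.Injective ε := by
    intro u w h
    exact (Fintype.equivFin _).injective (Fin.ext ((Infinite.natEmbedding L).injective h))
  obtain ⟨z, c, hz, hc, hN⟩ := core_backward (k := L) (Gadj E) l hnd
    ⟨fun u => ε (some u), ε none, fun u w h => Option.some_injective _ (hε h),
      fun u h => by have := hε h; simp at this,
      fun N hN => good_to_zero ho l hall hp _ _ N hN⟩
  obtain ⟨X, hX, hXi⟩ := ker_family (p := m - 2) (q := 2) (by omega)
    (fun i : Fin m => ![1, z (.inl i)])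
  obtain ⟨Y, hY, hYi⟩ := ker_family (p := n - 2) (q := 2) (by omega)
    (fun i : Fin n => ![1, z (.inr i)])
  refine ⟨X, Y, ?_⟩
  intro B hB
  have hX1 : ∀ k, ∑ i, X i k = 0 := fun k => by simpa using hX k 0
  have hX2 : ∀ k, ∑ i, X i k * z (.inl i) = 0 := fun k => by simpa using hX k 1
  have hY1 : ∀ k, ∑ i, Y i k = 0 := fun k => by simpa using hY k 0
  have hY2 : ∀ k, ∑ i, Y i k * z (.inr i) = 0 := fun k => by simpa using hY k 1
  let M : Fin m → Fin n → L := fun i j => ∑ s : Fin (m - 2) × Fin (n - 2), X i s.1 * Y j s.2 * B s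
  have hME : ∀ i j, (i, j) ∉ E → M i j = 0 := fun i j h => hB (i, j) h
  have c1 : ∀ j, ∑ i, M i j = 0 := by
    intro j
    simp only [M]
    rw [Finset.sum_comm]
    apply Finset.sum_eq_zero
    intro s _
    simp_rw [mul_assoc]
    rw [← Finset.sum_mul, hX1, zero_mul]
  have c2 : ∀ j, ∑ i, z (.inl i) * M i j = 0 := by
    intro j
    simp only [M, Finset.mul_sum]
    rw [Finset.sum_comm]
    apply Finset.sum_eq_zero
    intro s _
    have : ∀ i, z (.inl i) * (X i s.1 * Y j s.2 * B s) = (X i s.1 * z (.inl i)) * (Y j s.2 * B s) :=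
      fun i => by ring
    simp_rw [this]
    rw [← Finset.sum_mul, hX2, zero_mul]
  have r1 : ∀ i, ∑ j, M i j = 0 := by
    intro i
    simp only [M]
    rw [Finset.sum_comm]
    apply Finset.sum_eq_zero
    intro s _
    have : ∀ j, (X i s.1 * Y j s.2 * B s) = (Y j s.2) * (X i s.1 * B s) := fun j => by ring
    simp_rw [this]
    rw [← Finset.sum_mul, hY1, zero_mul]
  have r2 : ∀ i, ∑ j, z (.inr j) * M i j = 0 := by
    intro i
    simp only [M, Finset.mul_sum]
    rw [Finset.sum_comm]
    apply Finset.sum_eq_zero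
    intro s _
    have : ∀ j, z (.inr j) * (X i s.1 * Y j s.2 * B s) = (Y j s.2 * z (.inr j)) * (X i s.1 * B s) :=
      fun j => by ring
    simp_rw [this]
    rw [← Finset.sum_mul, hY2, zero_mul]
  have hzz : ∀ i j, z (.inl i) - z (.inr j) ≠ 0 := by
    intro i j h
    have := hz (sub_eq_zero.1 h)
    simp at this
  have h0 := hN (cycN fun i j => M i j * (z (.inl i) - z (.inr j))) ⟨by
      rintro (a | a) (b | b) <;> rfl, by
      rintro (a | a) (b | b) hG
      · rfl
      · simp only [cycN]; rw [hME a b hG, zero_mul]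
      · simp only [cycN]; rw [hME b a hG, zero_mul]
      · rfl, by
      rintro (a | a) <;> rw [Fintype.sum_sum_type]
      · simp only [cycN, Finset.sum_const_zero, zero_add]
        have : ∀ j, M a j * (z (.inl a) - z (.inr j)) =
          z (.inl a) * M a j - z (.inr j) * M a j := fun j => by ring
        simp_rw [this]
        rw [Finset.sum_sub_distrib, ← Finset.mul_sum, r1, r2]; simp
      · simp only [cycN, Finset.sum_const_zero, add_zero]
        have : ∀ i, M i a * (z (.inl i) - z (.inr a)) =
          z (.inl i) * M i a - z (.inr a) * M i a := fun j => by ring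
        simp_rw [this]
        rw [Finset.sum_sub_distrib, ← Finset.mul_sum, c1, c2]; simp, trivial, by
      intro u _
      have : ∑ w, (cycN fun i j => M i j * (z (.inl i) - z (.inr j))) u w / (z u - z w) = 0 := by
        rcases u with a | a <;> rw [Fintype.sum_sum_type]
        · simp only [cycN, zero_div, Finset.sum_const_zero, zero_add]
          rw [← r1 a]
          exact Finset.sum_congr rfl fun j _ => mul_div_cancel_right₀ _ (hzz a j)
        · simp only [cycN, zero_div, Finset.sum_const_zero, add_zero]
          rw [← neg_eq_zero, ← Finset.sum_neg_distrib, ← c1 a]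
          apply Finset.sum_congr rfl
          intro i _
          rw [← div_neg, neg_sub, mul_div_cancel_right₀ _ (hzz i a)]
      simp only [List.not_mem_nil, if_false, Finset.sum_const_zero, zero_add, this, mul_zero]⟩
  have hM0 : ∀ i j, M i j = 0 := by
    intro i j
    have : M i j * (z (.inl i) - z (.inr j)) = 0 := congrFun (congrFun h0 (.inl i)) (.inr j)
    exact (mul_eq_zero.1 this).resolve_right (hzz i j)
  have h1 : ∀ j, (fun k => ∑ l, Y j l * B (k, l)) = 0 := by
    intro j
    apply hXi
    intro i
    rw [← hM0 i j]
    simp only [M]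
    rw [Fintype.sum_prod_type]
    apply Finset.sum_congr rfl
    intro k _
    rw [Finset.mul_sum]
    exact Finset.sum_congr rfl fun l _ => by ring
  have h2 : ∀ k, (fun l => B (k, l)) = 0 := by
    intro k
    apply hYi
    intro j
    exact congrFun (h1 j) k
  funext ⟨k, l⟩
  exact congrFun (h2 k) l

lemma main_forward {F K L : Type*} [Field F] [Field K] [Field L] [Infinite L] {m n : ℕ}
    (hm : 2 ≤ m) (hn : 2 ≤ n) {E : Set (Fin m × Fin n)}
    (θ : MvPolynomial ((Fin m × Fin (m - 2)) ⊕ (Fin n × Fin (n - 2))) F →+* K)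
    (hθ : Function.Injective θ) (η : K →+* L)
    (a : Fin (m - 2) × Fin (n - 2) → (Eᶜ : Set (Fin m × Fin n)))
    (ha : Matrix.det (Matrix.of fun t s : Fin (m - 2) × Fin (n - 2) =>
      θ (MvPolynomial.X (Sum.inl ((a t).1.1, s.1))) *
        θ (MvPolynomial.X (Sum.inr ((a t).1.2, s.2)))) ≠ 0) :
    ∃ o : Fin m × Fin n → Bool, GoodOrientation E o := by
  have hφ : Function.Injective (η.comp θ) := η.injective.comp hθ
  refine forward_alg hm hn (fun i k => η.comp θ (MvPolynomial.X (Sum.inl (i, k))))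
    (fun j l => η.comp θ (MvPolynomial.X (Sum.inr (j, l)))) ?_ ?_ ?_
  · exact gen2_generic hm (fun i k => Sum.inl (i, k)) (by simp) _ hφ
  · exact gen2_generic hn (fun i k => Sum.inr (i, k)) (by simp) _ hφ
  · intro B hB
    have hdet : Matrix.det (η.mapMatrix (Matrix.of fun t s : Fin (m - 2) × Fin (n - 2) =>
        θ (MvPolynomial.X (Sum.inl ((a t).1.1, s.1))) *
        θ (MvPolynomial.X (Sum.inr ((a t).1.2, s.2))))) ≠ 0 := by
      rw [← RingHom.map_det]
      exact fun h => ha (η.injective (h.trans (map_zero _).symm))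
    apply Matrix.eq_zero_of_mulVec_eq_zero hdet
    ext t
    rw [Pi.zero_apply, ← hB (a t).1 (a t).2]
    simp only [Matrix.mulVec, dotProduct]
    apply Finset.sum_congr rfl
    intro s _
    simp only [RingHom.mapMatrix_apply, Matrix.map_apply, Matrix.of_apply, map_mul,
      RingHom.comp_apply]

theorem correctable_iff_orientation (F : Type*) [Field F] (m n : ℕ) (hm : 2 ≤ m) (hn : 2 ≤ n)
    (E : Set (Fin m × Fin n)) :
    TensorSpanning F m n (m - 2) (n - 2) Eᶜ ↔
      ∃ o : Fin m × Fin n → Bool, GoodOrientation E o := by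
  unfold TensorSpanning
  rw [Set.image_eq_range, span_iff_minor]
  constructor
  · rintro ⟨a, ha⟩
    exact main_forward (L := AlgebraicClosure (TField F m n (m - 2) (n - 2))) hm hn
      (algebraMap (MvPolynomial ((Fin m × Fin (m - 2)) ⊕ (Fin n × Fin (n - 2))) F)
        (TField F m n (m - 2) (n - 2))) (IsFractionRing.injective _ _) (algebraMap _ _) a ha
  · rintro ⟨o, ho⟩
    obtain ⟨X, Y, hXY⟩ := backward_alg (AlgebraicClosure F) hm hn ho
    have hsp := span_of_dual (fun (e : (Eᶜ : Set (Fin m × Fin n)))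
      (s : Fin (m - 2) × Fin (n - 2)) => X e.1.1 s.1 * Y e.1.2 s.2)
      (fun B hB => hXY B fun e he => hB ⟨e, he⟩)
    rw [span_iff_minor] at hsp
    obtain ⟨a, ha⟩ := hsp
    refine ⟨a, ?_⟩
    let K := TField F m n (m - 2) (n - 2)
    let R := MvPolynomial ((Fin m × Fin (m - 2)) ⊕ (Fin n × Fin (n - 2))) F
    let P : Matrix (Fin (m - 2) × Fin (n - 2)) (Fin (m - 2) × Fin (n - 2)) R :=
      Matrix.of fun t s => MvPolynomial.X (Sum.inl ((a t).1.1, s.1)) *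
        MvPolynomial.X (Sum.inr ((a t).1.2, s.2))
    have hP : P.det ≠ 0 := by
      intro h0
      apply ha
      let ψ : R →+* AlgebraicClosure F := (MvPolynomial.aeval (R := F)
        (Sum.elim (fun p : Fin m × Fin (m - 2) => X p.1 p.2)
          (fun p : Fin n × Fin (n - 2) => Y p.1 p.2))).toRingHom
      have h1 := congrArg ψ h0
      rw [RingHom.map_det, map_zero] at h1
      rw [← h1]
      congr 1
      ext t s
      simp [P, ψ]
      exact congrArg₂ (· * ·) (MvPolynomial.aeval_X (R := F) (Sum.elim (fun p : Fin m × Fin (m - 2) => X p.1 p.2)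
          (fun p : Fin n × Fin (n - 2) => Y p.1 p.2)) (Sum.inl ((a t).1.1, s.1))).symm
        (MvPolynomial.aeval_X (R := F) (Sum.elim (fun p : Fin m × Fin (m - 2) => X p.1 p.2)
          (fun p : Fin n × Fin (n - 2) => Y p.1 p.2)) (Sum.inr ((a t).1.2, s.2))).symm
    intro h0
    apply hP
    apply IsFractionRing.injective R K
    rw [RingHom.map_det, map_zero, ← h0]
    congr 1
    ext t s
    simp [P, tvec]
    rfl
end
end

section
/- Let E = ({1,2,3}×{1,2,3} ∖ {(3,3)}) ∪ ({4,5}×{4,5}) ∪ ({6,7}×{6,7}) ⊆ [7]×[7], a set of 16 pairs. For every field K and every choice of vectors u_1, …, u_7 ∈ K^4 and v_1, …, v_7 ∈ K^4, the family of 16 vectors {u_i ⊗ v_j : (i,j) ∈ E} (where u_i ⊗ v_j ∈ K^{[4]×[4]} has (k,l)-entry u_i(k)·v_j(l)) is linearly dependent. In particular, E is not a basis of the tensor matroid T_{7,7}(4,4,p) for any characteristic p. -/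
open scoped Classical

noncomputable section

/-- The set `E = ({1,2,3}² ∖ {(3,3)}) ∪ {4,5}² ∪ {6,7}² ⊆ [7]×[7]` (written here with
`Fin 7` zero-indexed: `({0,1,2}² ∖ {(2,2)}) ∪ {3,4}² ∪ {5,6}²`), a set of 16 pairs. -/
def E77 : Set (Fin 7 × Fin 7) :=
  {p | (p.1.val ≤ 2 ∧ p.2.val ≤ 2 ∧ ¬(p.1.val = 2 ∧ p.2.val = 2)) ∨
       ((p.1.val = 3 ∨ p.1.val = 4) ∧ (p.2.val = 3 ∨ p.2.val = 4)) ∨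
       ((p.1.val = 5 ∨ p.1.val = 6) ∧ (p.2.val = 5 ∨ p.2.val = 6))}

lemma aux_card : Nat.card E77 = 16 := by
  have h : E77 = ((Finset.univ.filter (fun p : Fin 7 × Fin 7 =>
      (p.1.val ≤ 2 ∧ p.2.val ≤ 2 ∧ ¬(p.1.val = 2 ∧ p.2.val = 2)) ∨
       ((p.1.val = 3 ∨ p.1.val = 4) ∧ (p.2.val = 3 ∨ p.2.val = 4)) ∨
       ((p.1.val = 5 ∨ p.1.val = 6) ∧ (p.2.val = 5 ∨ p.2.val = 6))) : Finset (Fin 7 × Fin 7)) :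
        Set (Fin 7 × Fin 7)) := by
    ext p
    simp [E77]
  rw [h, Nat.card_coe_set_eq, Set.ncard_coe_finset]
  decide

/-- Three vectors in `K^4` have a common nonzero annihilator. -/
lemma aux_kill {K : Type*} [Field K] (a b c : Fin 4 → K) :
    ∃ f : (Fin 4 → K) →ₗ[K] K, f ≠ 0 ∧ f a = 0 ∧ f b = 0 ∧ f c = 0 := by
  let g : ((Fin 4 → K) →ₗ[K] K) →ₗ[K] (Fin 3 → K) :=
    LinearMap.pi ![LinearMap.applyₗ a, LinearMap.applyₗ b, LinearMap.applyₗ c]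
  have hg : LinearMap.ker g ≠ ⊥ := by
    apply LinearMap.ker_ne_bot_of_finrank_lt
    simp
  obtain ⟨f, hf, hne⟩ := (Submodule.ne_bot_iff _).1 hg
  have hf' : g f = 0 := hf
  refine ⟨f, hne, ?_, ?_, ?_⟩
  · simpa [g] using congrFun hf' 0
  · simpa [g] using congrFun hf' 1
  · simpa [g] using congrFun hf' 2

/-- Either four vectors have a common nonzero annihilator, or every functional splits. -/
lemma aux_split {K : Type*} [Field K] (a b c d : Fin 4 → K) :
    (∃ f : (Fin 4 → K) →ₗ[K] K, f ≠ 0 ∧ f a = 0 ∧ f b = 0 ∧ f c = 0 ∧ f d = 0) ∨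
    (∀ f : (Fin 4 → K) →ₗ[K] K, ∃ f' f'' : (Fin 4 → K) →ₗ[K] K, f = f' + f'' ∧
      f' c = 0 ∧ f' d = 0 ∧ f'' a = 0 ∧ f'' b = 0) := by
  let g : ((Fin 4 → K) →ₗ[K] K) →ₗ[K] (Fin 4 → K) :=
    LinearMap.pi ![LinearMap.applyₗ a, LinearMap.applyₗ b, LinearMap.applyₗ c,
      LinearMap.applyₗ d]
  by_cases hg : LinearMap.ker g = ⊥
  · right
    intro f
    have hs : Function.Surjective g := by
      refine (LinearMap.injective_iff_surjective_of_finrank_eq_finrank ?_).1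
        (LinearMap.ker_eq_bot.1 hg)
      simp
    obtain ⟨f', hf'⟩ := hs ![f a, f b, 0, 0]
    have h0 : f' a = f a := by simpa [g] using congrFun hf' 0
    have h1 : f' b = f b := by simpa [g] using congrFun hf' 1
    have h2 : f' c = 0 := by simpa [g] using congrFun hf' 2
    have h3 : f' d = 0 := by simpa [g] using congrFun hf' 3
    exact ⟨f', f - f', by simp, h2, h3, by simp [h0], by simp [h1]⟩
  · left
    obtain ⟨f, hf, hne⟩ := (Submodule.ne_bot_iff _).1 hg
    have hf' : g f = 0 := hf
    refine ⟨f, hne, ?_, ?_, ?_, ?_⟩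
    · simpa [g] using congrFun hf' 0
    · simpa [g] using congrFun hf' 1
    · simpa [g] using congrFun hf' 2
    · simpa [g] using congrFun hf' 3

lemma aux_expand {K : Type*} [Field K] (f : (Fin 4 → K) →ₗ[K] K) (x : Fin 4 → K) :
    f x = ∑ k, x k * f (Pi.single k 1) := by
  rw [LinearMap.pi_apply_eq_sum_univ f x]
  refine Finset.sum_congr rfl fun k _ => ?_
  rw [smul_eq_mul]
  congr 2
  ext j
  simp [Pi.single_apply, eq_comm]

/-- A bilinear form `f₁ ⊗ g₁ - f₂ ⊗ g₂` killing all the pairs in `E` vanishes. -/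
lemma aux_form {K : Type*} [Field K] (u v : Fin 7 → Fin 4 → K)
    (hli : LinearIndependent K
        (fun e : E77 => fun kl : Fin 4 × Fin 4 => u e.1.1 kl.1 * v e.1.2 kl.2))
    (f₁ g₁ f₂ g₂ : (Fin 4 → K) →ₗ[K] K)
    (h : ∀ e ∈ E77, f₁ (u e.1) * g₁ (v e.2) = f₂ (u e.1) * g₂ (v e.2)) (x y : Fin 4 → K) :
    f₁ x * g₁ y = f₂ x * g₂ y := by
  let L : (Fin 4 × Fin 4 → K) →ₗ[K] K :=
    ∑ kl : Fin 4 × Fin 4, (f₁ (Pi.single kl.1 1) * g₁ (Pi.single kl.2 1)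
      - f₂ (Pi.single kl.1 1) * g₂ (Pi.single kl.2 1)) • LinearMap.proj kl
  have hL : ∀ x y : Fin 4 → K, L (fun kl => x kl.1 * y kl.2) = f₁ x * g₁ y - f₂ x * g₂ y := by
    intro x y
    rw [aux_expand f₁ x, aux_expand g₁ y, aux_expand f₂ x, aux_expand g₂ y]
    simp only [L, LinearMap.sum_apply, LinearMap.smul_apply, LinearMap.proj_apply, smul_eq_mul,
      Finset.sum_mul_sum, Fintype.sum_prod_type, ← Finset.sum_sub_distrib]
    refine Finset.sum_congr rfl fun k _ => Finset.sum_congr rfl fun l _ => ?_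
    ring
  have hspan := hli.span_eq_top_of_card_eq_finrank' (by
    rw [← Nat.card_eq_fintype_card, aux_card]; simp)
  have hz : L = 0 := by
    apply LinearMap.ext_on_range hspan
    intro e
    rw [hL, h e.1 e.2]
    simp
  have := hL x y
  rw [hz] at this
  exact (sub_eq_zero.1 this.symm)

lemma aux_mem {P : Fin 7 → Fin 7 → Prop}
    (h1 : ∀ i j : Fin 7, i.val ≤ 2 → j.val ≤ 2 → P i j)
    (h2 : ∀ i j : Fin 7, (i = 3 ∨ i = 4) → (j = 3 ∨ j = 4) → P i j)
    (h3 : ∀ i j : Fin 7, (i = 5 ∨ i = 6) → (j = 5 ∨ j = 6) → P i j) :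
    ∀ e ∈ E77, P e.1 e.2 := by
  rintro ⟨i, j⟩ (⟨a, b, -⟩ | ⟨a, b⟩ | ⟨a, b⟩)
  · exact h1 i j a b
  · exact h2 i j (by simp only at a; omega) (by simp only at b; omega)
  · exact h3 i j (by simp only at a; omega) (by simp only at b; omega)

lemma aux_low {P : Fin 7 → Prop} (h0 : P 0) (h1 : P 1) (h2 : P 2) (i : Fin 7) (hi : i.val ≤ 2) :
    P i := by
  have : i = 0 ∨ i = 1 ∨ i = 2 := by omega
  rcases this with rfl | rfl | rfl <;> assumption

lemma aux_ne {K : Type*} [Field K] {f : (Fin 4 → K) →ₗ[K] K} (h : f ≠ 0) : ∃ x, f x ≠ 0 := by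
  by_contra! hc
  exact h (LinearMap.ext hc)

theorem not_basis_7733 (K : Type*) [Field K] (u v : Fin 7 → Fin 4 → K) :
    ¬ LinearIndependent K
        (fun e : E77 => fun kl : Fin 4 × Fin 4 => u e.1.1 kl.1 * v e.1.2 kl.2) := by
  intro hli
  -- rank one forms
  have rank1 : ∀ f g : (Fin 4 → K) →ₗ[K] K, f ≠ 0 → g ≠ 0 →
      (∀ e ∈ E77, f (u e.1) = 0 ∨ g (v e.2) = 0) → False := by
    intro f g hf hg h
    obtain ⟨x, hx⟩ := aux_ne hf
    obtain ⟨y, hy⟩ := aux_ne hg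
    have := aux_form u v hli f g 0 0 (fun e he => by
      rcases h e he with h | h <;> simp [h]) x y
    simp [hx, hy] at this
  obtain ⟨f, hf, f0, f1, f2⟩ := aux_kill (u 0) (u 1) (u 2)
  obtain ⟨g, hg, g0, g1, g2⟩ := aux_kill (v 0) (v 1) (v 2)
  have fU := aux_low (P := fun i => f (u i) = 0) f0 f1 f2
  have gV := aux_low (P := fun i => g (v i) = 0) g0 g1 g2
  rcases aux_split (u 3) (u 4) (u 5) (u 6) with ⟨c, hc, c3, c4, c5, c6⟩ | hu
  · refine rank1 c g hc hg (aux_mem (P := fun i j => c (u i) = 0 ∨ g (v j) = 0) ?_ ?_ ?_)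
    · intro i j _ hj; exact Or.inr (gV j hj)
    · rintro i j (rfl | rfl) _ <;> simp [*]
    · rintro i j (rfl | rfl) _ <;> simp [*]
  rcases aux_split (v 3) (v 4) (v 5) (v 6) with ⟨c, hc, c3, c4, c5, c6⟩ | hv
  · refine rank1 f c hf hc (aux_mem (P := fun i j => f (u i) = 0 ∨ c (v j) = 0) ?_ ?_ ?_)
    · intro i j hi _; exact Or.inl (fU i hi)
    · rintro i j _ (rfl | rfl) <;> simp [*]
    · rintro i j _ (rfl | rfl) <;> simp [*]
  obtain ⟨f', f'', hff, f'5, f'6, f''3, f''4⟩ := hu f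
  obtain ⟨g', g'', hgg, g'5, g'6, g''3, g''4⟩ := hv g
  -- if `f` kills `u 3, u 4`
  by_cases hA : f (u 3) = 0 ∧ f (u 4) = 0
  · obtain ⟨hA3, hA4⟩ := hA
    obtain ⟨c, hc, c5, c6, -⟩ := aux_kill (v 5) (v 6) 0
    refine rank1 f c hf hc (aux_mem (P := fun i j => f (u i) = 0 ∨ c (v j) = 0) ?_ ?_ ?_)
    · intro i j hi _; exact Or.inl (fU i hi)
    · rintro i j (rfl | rfl) _
      · exact Or.inl hA3
      · exact Or.inl hA4
    · rintro i j _ (rfl | rfl)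
      · exact Or.inr c5
      · exact Or.inr c6
  by_cases hB : f (u 5) = 0 ∧ f (u 6) = 0
  · obtain ⟨hA3, hA4⟩ := hB
    obtain ⟨c, hc, c5, c6, -⟩ := aux_kill (v 3) (v 4) 0
    refine rank1 f c hf hc (aux_mem (P := fun i j => f (u i) = 0 ∨ c (v j) = 0) ?_ ?_ ?_)
    · intro i j hi _; exact Or.inl (fU i hi)
    · rintro i j _ (rfl | rfl)
      · exact Or.inr c5
      · exact Or.inr c6
    · rintro i j (rfl | rfl) _
      · exact Or.inl hA3
      · exact Or.inl hA4
  have key := aux_form u v hli f' g'' f'' g'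
    (aux_mem (P := fun i j => f' (u i) * g'' (v j) = f'' (u i) * g' (v j)) (by
      intro i j hi hj
      have a := fU i hi
      have b := gV j hj
      simp only [hff, LinearMap.add_apply] at a
      simp only [hgg, LinearMap.add_apply] at b
      linear_combination g'' (v j) * a - f'' (u i) * b)
      (by rintro i j (rfl | rfl) (rfl | rfl) <;> simp [*])
      (by rintro i j (rfl | rfl) (rfl | rfl) <;> simp [*]))
  have hg'' : ∀ y, g'' y = 0 := by
    intro y
    by_contra hy
    apply hA
    have k3 := key (u 3) y
    have k4 := key (u 4) y
    rw [f''3, zero_mul] at k3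
    rw [f''4, zero_mul] at k4
    have k3' := (mul_eq_zero.1 k3).resolve_right hy
    have k4' := (mul_eq_zero.1 k4).resolve_right hy
    rw [hff]
    simp [k3', k4', f''3, f''4]
  have hg' : ∀ y, g' y = 0 := by
    intro y
    by_contra hy
    apply hB
    have k3 := key (u 5) y
    have k4 := key (u 6) y
    rw [f'5, zero_mul] at k3
    rw [f'6, zero_mul] at k4
    have k3' := (mul_eq_zero.1 k3.symm).resolve_right hy
    have k4' := (mul_eq_zero.1 k4.symm).resolve_right hy
    rw [hff]
    simp [k3', k4', f'5, f'6]
  apply hg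
  ext y
  simp [hgg, hg', hg'']
end
end

section
/- Let m, n ≥ 1 and 1 ≤ d ≤ min(m,n), and let G ⊆ [m]×[n] be a bipartite graph. If G admits a d-coloring of its edges that is d-Bernstein, then for every field F the complement ([m]×[n]) ∖ G is spanning in the tensor matroid T_{m,n}(m−d, n−d, F) (equivalently, G is independent in the dual of T_{m,n}(m−d, n−d, F)). -/
open scoped Classical

noncomputable section

/-- A `d`-coloring `χ` of the edges of `G` is `d`-Bernstein if no cycle of `G` is
monochromatic and there is a labeling `c` of the vertices by vectors in `ℝ^d` with
coordinates summing to zero such that for every edge `(u,v)` of color `i`,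
`c_i(u) + c_i(v) > c_j(u) + c_j(v)` for every other color `j`. -/
def DBernstein {m n : ℕ} (G : Set (Fin m × Fin n)) (d : ℕ)
    (χ : Fin m × Fin n → Fin d) : Prop :=
  (∀ (k : ℕ) (i : ZMod k → Fin m) (j : ZMod k → Fin n), IsCycle G k i j →
      ¬ ∃ col : Fin d, ∀ t, χ (i t, j t) = col ∧ χ (i (t + 1), j t) = col) ∧
  ∃ c : (Fin m ⊕ Fin n) → Fin d → ℝ,
    (∀ v, ∑ i, c v i = 0) ∧
    (∀ e ∈ G, ∀ j : Fin d, j ≠ χ e →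
      c (Sum.inl e.1) j + c (Sum.inr e.2) j <
        c (Sum.inl e.1) (χ e) + c (Sum.inr e.2) (χ e))

lemma exists_cycle_of_seq {m n : ℕ} (S : Set (Fin m × Fin n)) (k : ℕ) (hk : 2 ≤ k)
    (i : ℕ → Fin m) (j : ℕ → Fin n)
    (hi : ∀ a b, a < b → b < k → i a ≠ i b) (hj : ∀ a b, a < b → b < k → j a ≠ j b)
    (h1 : ∀ t, (i t, j t) ∈ S) (h2 : ∀ t, (i (t + 1), j t) ∈ S)
    (h3 : (i 0, j (k - 1)) ∈ S) :
    ∃ (i' : ZMod k → Fin m) (j' : ZMod k → Fin n), IsCycle S k i' j' := by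
  have : NeZero k := ⟨by omega⟩
  have : Fact (1 < k) := ⟨by omega⟩
  refine ⟨fun t => i t.val, fun t => j t.val, hk, ?_, ?_, fun t => h1 _, ?_⟩
  · intro a b hab
    apply ZMod.val_injective k
    by_contra hne
    rcases Nat.lt_or_gt_of_ne hne with h | h
    · exact hi _ _ h (ZMod.val_lt b) hab
    · exact hi _ _ h (ZMod.val_lt a) hab.symm
  · intro a b hab
    apply ZMod.val_injective k
    by_contra hne
    rcases Nat.lt_or_gt_of_ne hne with h | h
    · exact hj _ _ h (ZMod.val_lt b) hab
    · exact hj _ _ h (ZMod.val_lt a) hab.symm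
  · intro t
    have hv : (t + 1).val = (t.val + 1) % k := by
      rw [ZMod.val_add, ZMod.val_one]
    have ht := ZMod.val_lt t
    show (i (t + 1).val, j t.val) ∈ S
    rw [hv]
    by_cases hlt : t.val + 1 < k
    · rw [Nat.mod_eq_of_lt hlt]; exact h2 _
    · have he : t.val + 1 = k := by omega
      have he' : t.val = k - 1 := by omega
      rw [he, Nat.mod_self, he']; exact h3

lemma exists_cycle {m n : ℕ} (S : Set (Fin m × Fin n)) (hne : S.Nonempty)
    (hr : ∀ e ∈ S, ∃ i', i' ≠ e.1 ∧ (i', e.2) ∈ S)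
    (hc : ∀ e ∈ S, ∃ j', j' ≠ e.2 ∧ (e.1, j') ∈ S) :
    ∃ (k : ℕ) (i' : ZMod k → Fin m) (j' : ZMod k → Fin n), IsCycle S k i' j' := by
  obtain ⟨e0, he0⟩ := hne
  have step : ∀ e : S, ∃ e' : S, e'.1.1 ≠ e.1.1 ∧ e'.1.2 ≠ e.1.2 ∧ (e'.1.1, e.1.2) ∈ S := by
    rintro ⟨e, he⟩
    obtain ⟨i', hi', hS⟩ := hr e he
    obtain ⟨j', hj', hS'⟩ := hc _ hS
    exact ⟨⟨_, hS'⟩, hi', hj', hS⟩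
  choose f hf1 hf2 hf3 using step
  let q : ℕ → S := fun t => f^[t] ⟨e0, he0⟩
  have hq : ∀ t, q (t + 1) = f (q t) := fun t => Function.iterate_succ_apply' f t _
  let i : ℕ → Fin m := fun t => (q t).1.1
  let j : ℕ → Fin n := fun t => (q t).1.2
  have h1 : ∀ t, (i t, j t) ∈ S := fun t => (q t).2
  have h2 : ∀ t, (i (t + 1), j t) ∈ S := by
    intro t; show ((q (t+1)).1.1, _) ∈ S; rw [hq]; exact hf3 _
  have hi1 : ∀ t, i (t + 1) ≠ i t := by
    intro t; show (q (t+1)).1.1 ≠ _; rw [hq]; exact hf1 _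
  have hj1 : ∀ t, j (t + 1) ≠ j t := by
    intro t; show (q (t+1)).1.2 ≠ _; rw [hq]; exact hf2 _
  have hex : ∃ k, 1 ≤ k ∧ ∃ a, i a = i (a + k) ∨ j a = j (a + k) := by
    obtain ⟨a, b, hab, h⟩ := Finite.exists_ne_map_eq_of_infinite i
    rcases Nat.lt_or_gt_of_ne hab with h' | h'
    · exact ⟨b - a, by omega, a, Or.inl (by rw [h]; congr 1; omega)⟩
    · exact ⟨a - b, by omega, b, Or.inl (by rw [← h]; congr 1; omega)⟩
  obtain ⟨hk1, a, ha⟩ := Nat.find_spec hex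
  have hmin := fun k' => Nat.find_min (H := hex) (m := k')
  generalize Nat.find hex = k at hk1 ha hmin
  have hmin' : ∀ x y, x < y → y - x < k → i x ≠ i y ∧ j x ≠ j y := by
    intro x y hxy hlt
    have := hmin _ hlt
    push Not at this
    have := this (by omega) x
    rwa [show x + (y - x) = y by omega] at this
  have hk2 : 2 ≤ k := by
    by_contra hlt
    have : k = 1 := by omega
    subst this
    rcases ha with h | h
    · exact hi1 a h.symm
    · exact hj1 a h.symm
  refine ⟨k, ?_⟩
  rcases ha with h | h
  · refine exists_cycle_of_seq S k hk2 (fun t => i (a + t)) (fun t => j (a + t)) ?_ ?_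
      (fun t => h1 _) (fun t => h2 _) ?_
    · intro x y hxy hy; exact (hmin' _ _ (by omega) (by omega)).1
    · intro x y hxy hy; exact (hmin' _ _ (by omega) (by omega)).2
    · have := h2 (a + (k - 1))
      rw [show a + (k - 1) + 1 = a + k by omega, ← h] at this
      exact this
  · refine exists_cycle_of_seq S k hk2 (fun t => i (a + 1 + t)) (fun t => j (a + 1 + t)) ?_ ?_
      (fun t => h1 _) (fun t => h2 _) ?_
    · intro x y hxy hy; exact (hmin' _ _ (by omega) (by omega)).1
    · intro x y hxy hy; exact (hmin' _ _ (by omega) (by omega)).2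
    · have := h2 a
      rw [h] at this
      simpa [show a + 1 + (k - 1) = a + k by omega] using this

/-- zero row and column sums in each color force zero -/
lemma forest_zero {m n d : ℕ} {F : Type*} [Field F] (G : Set (Fin m × Fin n))
    (χ : Fin m × Fin n → Fin d)
    (hχ : ∀ (k : ℕ) (i : ZMod k → Fin m) (j : ZMod k → Fin n), IsCycle G k i j →
      ¬ ∃ col : Fin d, ∀ t, χ (i t, j t) = col ∧ χ (i (t + 1), j t) = col)
    (N : Fin m → Fin n → F) (hN : ∀ i j, (i, j) ∉ G → N i j = 0)
    (h1 : ∀ j k, ∑ i, (if χ (i, j) = k then N i j else 0) = 0)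
    (h2 : ∀ i k, ∑ j, (if χ (i, j) = k then N i j else 0) = 0) (i : Fin m) (j : Fin n) :
    N i j = 0 := by
  by_contra hne
  let S : Set (Fin m × Fin n) := {e | N e.1 e.2 ≠ 0 ∧ χ e = χ (i, j)}
  have hS : S.Nonempty := ⟨(i, j), hne, rfl⟩
  obtain ⟨k, i', j', hk, hi, hj, ha, hb⟩ := exists_cycle S hS (by
    rintro ⟨a, b⟩ ⟨hab, hc⟩
    by_contra hcon
    push Not at hcon
    have := h1 b (χ (i, j))
    rw [Finset.sum_eq_single a] at this
    · rw [if_pos hc] at this; exact hab this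
    · intro x _ hx
      by_cases hxc : χ (x, b) = χ (i, j)
      · rw [if_pos hxc]
        by_contra h0
        exact hcon x hx ⟨h0, hxc⟩
      · rw [if_neg hxc]
    · simp) (by
    rintro ⟨a, b⟩ ⟨hab, hc⟩
    by_contra hcon
    push Not at hcon
    have := h2 a (χ (i, j))
    rw [Finset.sum_eq_single b] at this
    · rw [if_pos hc] at this; exact hab this
    · intro x _ hx
      by_cases hxc : χ (a, x) = χ (i, j)
      · rw [if_pos hxc]
        by_contra h0
        exact hcon x hx ⟨h0, hxc⟩
      · rw [if_neg hxc]
    · simp)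
  have hG : ∀ e ∈ S, e ∈ G := by
    rintro ⟨a, b⟩ ⟨h0, _⟩
    by_contra h
    exact h0 (hN a b h)
  exact hχ k i' j' ⟨hk, hi, hj, fun t => hG _ (ha t), fun t => hG _ (hb t)⟩
    ⟨χ (i, j), fun t => ⟨(ha t).2, (hb t).2⟩⟩

/-- the tropical parameter -/
def tau (F : Type*) [Field F] (a : ℝ) : HahnSeries ℝ F := HahnSeries.single (-a) 1

lemma tau_add (F : Type*) [Field F] (a b : ℝ) : tau F (a + b) = tau F a * tau F b := by
  simp [tau, HahnSeries.single_mul_single, add_comm]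

lemma tau_ne_zero (F : Type*) [Field F] (a : ℝ) : tau F a ≠ 0 := by
  simp [tau]

lemma coeff_mul_tau {F : Type*} [Field F] (x : HahnSeries ℝ F) (a g : ℝ) :
    (x * tau F a).coeff g = x.coeff (g + a) := by
  simp [tau, HahnSeries.coeff_mul_single]

lemma hahn_core {m n d : ℕ} {F : Type*} [Field F] (G : Set (Fin m × Fin n))
    (χ : Fin m × Fin n → Fin d)
    (hχ : ∀ (k : ℕ) (i : ZMod k → Fin m) (j : ZMod k → Fin n), IsCycle G k i j →
      ¬ ∃ col : Fin d, ∀ t, χ (i t, j t) = col ∧ χ (i (t + 1), j t) = col)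
    (c : (Fin m ⊕ Fin n) → Fin d → ℝ)
    (hc : ∀ e ∈ G, ∀ j : Fin d, j ≠ χ e →
      c (Sum.inl e.1) j + c (Sum.inr e.2) j <
        c (Sum.inl e.1) (χ e) + c (Sum.inr e.2) (χ e))
    (M : Fin m → Fin n → HahnSeries ℝ F) (hM : ∀ i j, (i, j) ∉ G → M i j = 0)
    (h1 : ∀ j k, ∑ i, M i j * tau F (c (Sum.inl i) k) = 0)
    (h2 : ∀ i k, ∑ j, M i j * tau F (c (Sum.inr j) k) = 0) (i : Fin m) (j : Fin n) :
    M i j = 0 := by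
  by_contra hne
  let w : Fin m → Fin n → Fin d → ℝ := fun i j k => c (Sum.inl i) k + c (Sum.inr j) k
  let N : Fin m → Fin n → HahnSeries ℝ F := fun i j => M i j * tau F (w i j (χ (i, j)))
  let T : Finset (Fin m × Fin n) := Finset.univ.filter fun e => N e.1 e.2 ≠ 0
  have hT : T.Nonempty := ⟨(i, j), by
    simp only [T, Finset.mem_filter, Finset.mem_univ, true_and]
    exact mul_ne_zero hne (tau_ne_zero _ _)⟩
  obtain ⟨e, heT, hemin⟩ := T.exists_min_image (fun e => (N e.1 e.2).order) hT
  have he0 : N e.1 e.2 ≠ 0 := by simpa [T] using heT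
  set g := (N e.1 e.2).order with hg
  have hlow : ∀ a b x, x < g → (N a b).coeff x = 0 := by
    intro a b x hx
    by_cases h0 : N a b = 0
    · rw [h0]; rfl
    · exact HahnSeries.coeff_eq_zero_of_lt_order
        (lt_of_lt_of_le hx (hemin (a, b) (by simpa [T] using h0)))
  have key : ∀ a b k, (M a b * tau F (w a b k)).coeff g =
      if χ (a, b) = k then (N a b).coeff g else 0 := by
    intro a b k
    split_ifs with h
    · rw [← h]
    · by_cases hab : (a, b) ∈ G
      · have hlt := hc (a, b) hab k (Ne.symm h)
        have : M a b * tau F (w a b k) = N a b * tau F (w a b k - w a b (χ (a, b))) := by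
          simp only [N]
          rw [mul_assoc, ← tau_add]
          congr 2; ring
        rw [this, coeff_mul_tau]
        apply hlow
        simp only [w]
        linarith
      · rw [hM a b hab]; simp
  have := forest_zero G χ hχ (fun a b => (N a b).coeff g)
    (by intro a b hab; simp [N, hM a b hab])
    (by
      intro b k
      rw [← Finset.sum_congr rfl fun a _ => key a b k, ← HahnSeries.coeff_sum]
      have : ∑ a, M a b * tau F (w a b k) =
          (∑ a, M a b * tau F (c (Sum.inl a) k)) * tau F (c (Sum.inr b) k) := by
        rw [Finset.sum_mul]
        exact Finset.sum_congr rfl fun a _ => by simp only [w]; rw [tau_add, mul_assoc]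
      rw [this, h1]; simp)
    (by
      intro a k
      rw [← Finset.sum_congr rfl fun b _ => key a b k, ← HahnSeries.coeff_sum]
      have : ∑ b, M a b * tau F (w a b k) =
          (∑ b, M a b * tau F (c (Sum.inr b) k)) * tau F (c (Sum.inl a) k) := by
        rw [Finset.sum_mul]
        exact Finset.sum_congr rfl fun b _ => by simp only [w]; rw [add_comm, tau_add, mul_assoc]
      rw [this, h2]; simp) e.1 e.2
  exact HahnSeries.coeff_order_eq_zero.not.mpr he0 this

lemma exists_indep_ker {L : Type*} [Field L] (m d : ℕ) (P : Fin d → Fin m → L) :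
    ∃ U : Fin (m - d) → Fin m → L, LinearIndependent L U ∧
      ∀ k l, ∑ i, U l i * P k i = 0 := by
  let f : (Fin m → L) →ₗ[L] (Fin d → L) := (Matrix.of P).mulVecLin
  have hdim : m - d ≤ Module.finrank L (LinearMap.ker f) := by
    have h1 := f.finrank_range_add_finrank_ker
    have h2 := (LinearMap.range f).finrank_le
    simp only [Module.finrank_fin_fun] at h1 h2
    omega
  let b := Module.finBasis L (LinearMap.ker f)
  refine ⟨fun l => (b (Fin.castLE hdim l) : Fin m → L), ?_, ?_⟩
  · have h := b.linearIndependent.comp _ (Fin.castLE_injective hdim)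
    exact h.map' (LinearMap.ker f).subtype (Submodule.ker_subtype _)
  · intro k l
    have h : f (b (Fin.castLE hdim l) : Fin m → L) = 0 := (b (Fin.castLE hdim l)).2
    have h' := congrFun h k
    simp only [f, Matrix.mulVecLin_apply, Matrix.mulVec, dotProduct, Matrix.of_apply,
      Pi.zero_apply] at h'
    rw [← h']
    exact Finset.sum_congr rfl fun _ _ => mul_comm _ _

lemma span_transfer {α ι R K L : Type*} [Fintype ι] [CommRing R] [IsDomain R]
    [Field K] [Algebra R K] [IsFractionRing R K] [Field L] (φ : R →+* L)
    (w : α → ι → R) (E : Set α)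
    (h : Submodule.span L ((fun e kl => φ (w e kl)) '' E) = ⊤) :
    Submodule.span K ((fun e kl => algebraMap R K (w e kl)) '' E) = ⊤ := by
  let b := Module.Basis.ofSpan h.ge
  let b' := b.reindex (b.indexEquiv (Pi.basisFun L ι))
  have hb' : ∀ x, ∃ e ∈ E, (fun kl => φ (w e kl)) = b' x := by
    intro x
    have : b' x ∈ Set.range b := by simp [b']
    exact Module.Basis.ofSpan_subset h.ge this
  choose e heE he using hb'
  let A : Matrix ι ι R := Matrix.of fun x kl => w (e x) kl
  have hL : (φ.mapMatrix A).det ≠ 0 := by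
    have hli : LinearIndependent L (φ.mapMatrix A).row := by
      have : (φ.mapMatrix A).row = b' := by
        funext x; rw [← he]; rfl
      rw [this]; exact b'.linearIndependent
    rw [Matrix.linearIndependent_rows_iff_isUnit, Matrix.isUnit_iff_isUnit_det] at hli
    exact hli.ne_zero
  have hR : A.det ≠ 0 := by
    intro h0
    rw [← RingHom.map_det, h0, map_zero] at hL
    exact hL rfl
  have hK : ((algebraMap R K).mapMatrix A).det ≠ 0 := by
    rw [← RingHom.map_det]
    intro h0
    exact hR ((map_eq_zero_iff _ (IsFractionRing.injective R K)).mp h0)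
  have hli : LinearIndependent K ((algebraMap R K).mapMatrix A).row := by
    rw [Matrix.linearIndependent_rows_iff_isUnit, Matrix.isUnit_iff_isUnit_det]
    exact hK.isUnit
  have hsp := hli.span_eq_top_of_card_eq_finrank' (by simp)
  rw [eq_top_iff, ← hsp]
  apply Submodule.span_mono
  rintro _ ⟨x, rfl⟩
  exact ⟨e x, heE x, rfl⟩

theorem dBernstein_implies_spanning (m n d : ℕ) (hm : 1 ≤ m) (hn : 1 ≤ n)
    (hd : 1 ≤ d) (hdm : d ≤ m) (hdn : d ≤ n) (G : Set (Fin m × Fin n))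
    (h : ∃ χ : Fin m × Fin n → Fin d, DBernstein G d χ)
    (F : Type*) [Field F] :
    TensorSpanning F m n (m - d) (n - d) Gᶜ := by
  obtain ⟨χ, hχ, c, -, hc⟩ := h
  obtain ⟨U, hU, hU0⟩ := exists_indep_ker m d (fun k i => tau F (c (Sum.inl i) k))
  obtain ⟨V, hV, hV0⟩ := exists_indep_ker n d (fun k j => tau F (c (Sum.inr j) k))
  let φ : MvPolynomial ((Fin m × Fin (m - d)) ⊕ (Fin n × Fin (n - d))) F →+*
      HahnSeries ℝ F :=
    MvPolynomial.eval₂Hom HahnSeries.C (Sum.elim (fun x => U x.2 x.1) (fun x => V x.2 x.1))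
  let w : Fin m × Fin n → Fin (m - d) × Fin (n - d) →
      MvPolynomial ((Fin m × Fin (m - d)) ⊕ (Fin n × Fin (n - d))) F :=
    fun e kl => MvPolynomial.X (Sum.inl (e.1, kl.1)) * MvPolynomial.X (Sum.inr (e.2, kl.2))
  have hw : tvec F m n (m - d) (n - d) = fun e kl => algebraMap _ _ (w e kl) := by
    funext e kl
    simp [tvec, w]
  unfold TensorSpanning
  rw [hw]
  apply span_transfer φ
  have hφ : ∀ e kl, φ (w e kl) = U kl.1 e.1 * V kl.2 e.2 := by
    intro e kl
    simp [φ, w]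
  simp only [hφ]
  by_contra hne
  obtain ⟨f, hf0, hf⟩ := Submodule.exists_le_ker_of_lt_top _ (lt_top_iff_ne_top.mpr hne)
  apply hf0
  let A : Fin (m - d) × Fin (n - d) → HahnSeries ℝ F := fun kl => f (Pi.single kl 1)
  have hfA : ∀ v, f v = ∑ k, ∑ l, v (k, l) * A (k, l) := by
    intro v
    rw [← Fintype.sum_prod_type (fun kl => v kl * A kl)]
    conv_lhs => rw [pi_eq_sum_univ' v, map_sum]
    refine Finset.sum_congr rfl fun x _ => ?_
    rw [map_smul, smul_eq_mul]
  let M : Fin m → Fin n → HahnSeries ℝ F := fun i j => ∑ k, ∑ l, U k i * V l j * A (k, l)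
  have hM0 : ∀ i j, M i j = 0 := by
    apply hahn_core G χ hχ c hc M
    · intro i j hij
      have : (fun kl : Fin (m - d) × Fin (n - d) => U kl.1 i * V kl.2 j) ∈ LinearMap.ker f :=
        hf (Submodule.subset_span ⟨(i, j), hij, rfl⟩)
      rw [LinearMap.mem_ker, hfA] at this
      exact this
    · intro j k
      simp only [M, Finset.sum_mul]
      rw [Finset.sum_comm]
      refine Finset.sum_eq_zero fun a _ => ?_
      rw [Finset.sum_comm]
      refine Finset.sum_eq_zero fun b _ => ?_
      have := congrArg (· * (V b j * A (a, b))) (hU0 k a)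
      simp only [zero_mul, Finset.sum_mul] at this
      rw [← this]
      exact Finset.sum_congr rfl fun _ _ => by ring
    · intro i k
      simp only [M, Finset.sum_mul]
      rw [Finset.sum_comm]
      refine Finset.sum_eq_zero fun a _ => ?_
      rw [Finset.sum_comm]
      refine Finset.sum_eq_zero fun b _ => ?_
      have := congrArg (· * (U a i * A (a, b))) (hV0 k b)
      simp only [zero_mul, Finset.sum_mul] at this
      rw [← this]
      exact Finset.sum_congr rfl fun _ _ => by ring
  rw [Fintype.linearIndependent_iff] at hU hV
  have hA : ∀ k l, A (k, l) = 0 := by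
    intro k
    apply hV
    funext j
    have := hU (fun k => ∑ l, A (k, l) * V l j) (by
      funext i
      have := hM0 i j
      simp only [M] at this
      simp only [Finset.sum_apply, Pi.smul_apply, smul_eq_mul, Pi.zero_apply, Finset.sum_mul]
      rw [← this]
      exact Finset.sum_congr rfl fun _ _ => Finset.sum_congr rfl fun _ _ => by ring) k
    simpa using this
  refine LinearMap.ext fun v => ?_
  rw [hfA]
  simp [hA]
end
end

section
/- Let F be a field and let m, n, r be integers with 3 ≤ m and 0 ≤ r ≤ n. Let A_1, …, A_m ⊆ [n], set E = ∪_{i∈[m]} {i}×A_i ⊆ [m]×[n], and let S_3 = {j ∈ [n] : j belongs to exactly three of the sets A_1,…,A_m}. Assume that no element of [n] belongs to more than three of the sets A_i and that |S_3| ≤ r. Then E is independent in the tensor matroid T_{m,n}(3,r,F) if and only if E ∖ ([m]×S_3) is independent in the tensor matroid T_{m,n}(3, r−|S_3|, F). -/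
open scoped Classical

noncomputable section

/-- `Smult A k` is the set of `j ∈ [n]` which appear in exactly `k` of the sets `A i`. -/
def Smult {m n : ℕ} (A : Fin m → Finset (Fin n)) (k : ℕ) : Finset (Fin n) :=
  Finset.univ.filter (fun j => (Finset.univ.filter (fun i => j ∈ A i)).card = k)

/-- Evaluation criterion for linear independence of polynomial vectors. -/
lemma spec_indep {F L σ ι κ : Type*} [Field F] [Field L] [Algebra F L] [Fintype ι] [Fintype κ]
    (M : ι → κ → MvPolynomial σ F) (p : σ → L)
    (h : LinearIndependent L (fun i k => MvPolynomial.aeval p (M i k))) :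
    LinearIndependent (FractionRing (MvPolynomial σ F))
      (fun i k => algebraMap (MvPolynomial σ F) (FractionRing (MvPolynomial σ F)) (M i k)) := by
  rw [← LinearIndependent.iff_fractionRing (MvPolynomial σ F)]
  rw [Fintype.linearIndependent_iff]
  intro g hg
  have hg' : ∀ k, ∑ i, g i * M i k = 0 := by
    intro k
    have h1 := congrFun hg k
    apply IsFractionRing.injective (MvPolynomial σ F) (FractionRing (MvPolynomial σ F))
    simpa [Finset.sum_apply, Algebra.smul_def] using h1
  let W : Matrix ι κ L := fun i k => MvPolynomial.aeval p (M i k)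
  have hB : ∃ B : Matrix κ ι L, W * B = 1 := by
    have hinj : Function.Injective W.vecMul := by
      rw [Matrix.vecMul_injective_iff]; exact h
    obtain ⟨f, hf⟩ := W.vecMulLinear.exists_leftInverse_of_injective
      (LinearMap.ker_eq_bot.2 hinj)
    refine ⟨(LinearMap.toMatrix' f).transpose, ?_⟩
    ext i j
    have h2 := congrFun (LinearMap.congr_fun hf (Pi.single i 1)) j
    have h3 : f (W i) j = (1 : Matrix ι ι L) i j := by
      have : W.vecMulLinear (Pi.single i 1) = W i := by
        simp [Matrix.vecMulLinear, Matrix.single_one_vecMul]; rfl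
      rw [LinearMap.comp_apply, this] at h2
      rw [h2, Matrix.one_apply, LinearMap.id_apply, Pi.single_apply]
      simp [eq_comm]
    rw [← h3, ← LinearMap.toMatrix'_mulVec f (W i)]
    simp [Matrix.mul_apply, Matrix.mulVec, dotProduct, mul_comm]
  obtain ⟨B, hB⟩ := hB
  let ML : Matrix ι κ (MvPolynomial σ L) := fun i k => MvPolynomial.map (algebraMap F L) (M i k)
  let BC : Matrix κ ι (MvPolynomial σ L) := fun k i => MvPolynomial.C (B k i)
  let N : Matrix ι ι (MvPolynomial σ L) := ML * BC
  have hev : N.map (MvPolynomial.eval p) = 1 := by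
    rw [← hB]
    ext i j
    rw [Matrix.map_apply, show N = ML * BC from rfl, Matrix.mul_apply, Matrix.mul_apply, map_sum]
    refine Finset.sum_congr rfl fun k _ => ?_
    simp only [ML, BC, W, map_mul, MvPolynomial.eval_C,
      MvPolynomial.eval_map, MvPolynomial.aeval_def]
  have hdet : N.det ≠ 0 := by
    intro h0
    have h1 : (MvPolynomial.eval p) N.det = 1 := by
      rw [RingHom.map_det, RingHom.mapMatrix_apply, hev, Matrix.det_one]
    rw [h0, map_zero] at h1
    exact zero_ne_one h1
  have hz : Matrix.vecMul (fun i => MvPolynomial.map (algebraMap F L) (g i)) N = 0 := by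
    have : Matrix.vecMul (fun i => MvPolynomial.map (algebraMap F L) (g i)) ML = 0 := by
      ext1 k
      have := congrArg (MvPolynomial.map (algebraMap F L)) (hg' k)
      simpa [Matrix.vecMul, dotProduct, ML] using this
    change Matrix.vecMul _ (ML * BC) = 0
    rw [← Matrix.vecMul_vecMul, this, Matrix.zero_vecMul]
  have := Matrix.eq_zero_of_vecMul_eq_zero hdet hz
  intro i
  apply MvPolynomial.map_injective _ (algebraMap F L).injective
  simpa using congrFun this i

/-- Coordinate form of independence of `x i ⊗ y j`, `(i,j) ∈ E`. -/
def Crit {K : Type*} [Field K] {m n s r : ℕ} (x : Fin m → Fin s → K) (y : Fin n → Fin r → K)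
    (E : Set (Fin m × Fin n)) : Prop :=
  ∀ c : Fin m → Fin n → K, (∀ i j, (i, j) ∉ E → c i j = 0) →
    (∀ k l, ∑ i, ∑ j, c i j * (x i k * y j l) = 0) → ∀ i j, c i j = 0

lemma crit_iff {K : Type*} [Field K] {m n s r : ℕ} (x : Fin m → Fin s → K) (y : Fin n → Fin r → K)
    (E : Set (Fin m × Fin n)) :
    LinearIndependent K (fun (e : E) (kl : Fin s × Fin r) => x e.1.1 kl.1 * y e.1.2 kl.2) ↔
      Crit x y E := by
  rw [Fintype.linearIndependent_iff]
  have key : ∀ (c : Fin m → Fin n → K), (∀ i j, (i, j) ∉ E → c i j = 0) → ∀ k l,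
      ∑ e : E, c e.1.1 e.1.2 * (x e.1.1 k * y e.1.2 l)
        = ∑ i, ∑ j, c i j * (x i k * y j l) := by
    intro c hc k l
    rw [← Fintype.sum_prod_type' (f := fun i j => c i j * (x i k * y j l))]
    rw [← Finset.sum_subtype (p := (· ∈ E)) (Finset.univ.filter (· ∈ E)) (by simp)
      (fun e : Fin m × Fin n => c e.1 e.2 * (x e.1 k * y e.2 l))]
    rw [Finset.sum_filter]
    · refine Finset.sum_congr rfl ?_
      rintro ⟨i, j⟩ -
      split_ifs with h
      · rfl
      · simp [hc i j h]
  constructor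
  · intro h c hc hs i j
    by_cases hij : (i, j) ∈ E
    · refine h (fun e => c e.1.1 e.1.2) ?_ ⟨(i, j), hij⟩
      ext ⟨k, l⟩
      simpa [Finset.sum_apply] using (key c hc k l).trans (hs k l)
    · exact hc i j hij
  · intro h g hg e
    let c : Fin m → Fin n → K := fun i j => if h : (i, j) ∈ E then g ⟨(i, j), h⟩ else 0
    have hc : ∀ i j, (i, j) ∉ E → c i j = 0 := fun i j hij => dif_neg hij
    have hce : ∀ e : E, c e.1.1 e.1.2 = g e := fun e => dif_pos e.2
    rw [← hce]
    refine h c hc ?_ _ _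
    intro k l
    rw [← key c hc k l]
    have := congrFun hg (k, l)
    simpa [Finset.sum_apply, hce] using this

def gx (F : Type*) [Field F] (m n s r : ℕ) (i : Fin m) (k : Fin s) : TField F m n s r :=
  algebraMap (MvPolynomial ((Fin m × Fin s) ⊕ (Fin n × Fin r)) F) (TField F m n s r)
      (MvPolynomial.X (Sum.inl (i, k)))

def gy (F : Type*) [Field F] (m n s r : ℕ) (j : Fin n) (l : Fin r) : TField F m n s r :=
  algebraMap (MvPolynomial ((Fin m × Fin s) ⊕ (Fin n × Fin r)) F) (TField F m n s r)
      (MvPolynomial.X (Sum.inr (j, l)))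

lemma tensor_crit (F : Type*) [Field F] (m n s r : ℕ) (E : Set (Fin m × Fin n)) :
    TensorIndep F m n s r E ↔ Crit (gx F m n s r) (gy F m n s r) E :=
  crit_iff (gx F m n s r) (gy F m n s r) E

lemma tensor_of_spec (F : Type*) [Field F] (m n s r : ℕ) (E : Set (Fin m × Fin n))
    {L : Type*} [Field L] [Algebra F L] (x : Fin m → Fin s → L) (y : Fin n → Fin r → L)
    (h : Crit x y E) : TensorIndep F m n s r E := by
  have := spec_indep (F := F) (L := L)
    (fun (e : E) (kl : Fin s × Fin r) =>
      (MvPolynomial.X (Sum.inl (e.1.1, kl.1)) * MvPolynomial.X (Sum.inr (e.1.2, kl.2)) :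
        MvPolynomial ((Fin m × Fin s) ⊕ (Fin n × Fin r)) F))
    (Sum.elim (fun a => x a.1 a.2) (fun a => y a.1 a.2))
    (by simpa using (crit_iff x y E).2 h)
  simp only [map_mul] at this
  exact this

lemma gx_indep (F : Type*) [Field F] (m n s r : ℕ) (I : Finset (Fin m)) (hI : I.card = s) :
    LinearIndependent (TField F m n s r) (fun i : I => gx F m n s r i) := by
  let e : I ≃ Fin s := I.equivFinOfCardEq hI
  refine spec_indep (F := F) (L := F)
    (fun (i : I) (k : Fin s) => (MvPolynomial.X (Sum.inl (i.1, k)) :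
        MvPolynomial ((Fin m × Fin s) ⊕ (Fin n × Fin r)) F))
    (Sum.elim (fun a => if h : a.1 ∈ I then (if e ⟨a.1, h⟩ = a.2 then 1 else 0) else 0) 0) ?_
  rw [Fintype.linearIndependent_iff]
  intro g hg i
  have := congrFun hg (e i)
  simpa [Finset.sum_apply] using this

lemma gy_indep (F : Type*) [Field F] (m n s r : ℕ) (I : Finset (Fin n)) (hI : I.card ≤ r) :
    LinearIndependent (TField F m n s r) (fun i : I => gy F m n s r i) := by
  let e : I → Fin r := fun i => Fin.castLE hI (I.equivFin i)
  have he : Function.Injective e := (Fin.castLE_injective hI).comp I.equivFin.injective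
  refine spec_indep (F := F) (L := F)
    (fun (i : I) (k : Fin r) => (MvPolynomial.X (Sum.inr (i.1, k)) :
        MvPolynomial ((Fin m × Fin s) ⊕ (Fin n × Fin r)) F))
    (Sum.elim 0 (fun a => if h : a.1 ∈ I then (if e ⟨a.1, h⟩ = a.2 then 1 else 0) else 0)) ?_
  rw [Fintype.linearIndependent_iff]
  intro g hg i
  have := congrFun hg (e i)
  simpa [Finset.sum_apply, he.eq_iff] using this

lemma basis_inj {K : Type*} [Field K] {m s : ℕ} (x : Fin m → Fin s → K) (I : Finset (Fin m))
    (h : LinearIndependent K (fun i : I => x i)) (c : Fin m → K) (hc : ∀ i ∉ I, c i = 0)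
    (hs : ∀ k, ∑ i, c i * x i k = 0) : ∀ i, c i = 0 := by
  intro i
  by_cases hi : i ∈ I
  · rw [Fintype.linearIndependent_iff] at h
    refine h (fun i => c i) ?_ ⟨i, hi⟩
    ext k
    simp only [Finset.sum_apply, Pi.smul_apply, smul_eq_mul, Pi.zero_apply]
    rw [← hs k, Finset.sum_coe_sort I (fun i => c i * x i k)]
    apply Finset.sum_subset (Finset.subset_univ _)
    intro i _ hi
    simp [hc i hi]
  · exact hc i hi

lemma basis_surj {K : Type*} [Field K] {m s : ℕ} (x : Fin m → Fin s → K) (I : Finset (Fin m))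
    (h : LinearIndependent K (fun i : I => x i)) (hI : I.card = s) (d : Fin s → K) :
    ∃ a : Fin m → K, (∀ i ∉ I, a i = 0) ∧ ∀ k, ∑ i, a i * x i k = d k := by
  have hsp := h.span_eq_top_of_card_eq_finrank' (by simp [hI])
  have hd : d ∈ Submodule.span K (Set.range (fun i : I => x i)) := by rw [hsp]; trivial
  obtain ⟨b, hb⟩ := (Submodule.mem_span_range_iff_exists_fun K).1 hd
  refine ⟨fun i => if h : i ∈ I then b ⟨i, h⟩ else 0, fun i hi => dif_neg hi, fun k => ?_⟩
  rw [← hb]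
  simp only [Finset.sum_apply, Pi.smul_apply, smul_eq_mul]
  rw [← Finset.sum_subset (Finset.subset_univ I), ← Finset.sum_coe_sort I]
  · refine Finset.sum_congr rfl fun i _ => ?_
    simp
  · intro i _ hi
    simp [hi]

lemma core1 {K : Type*} [Field K] {m n r s : ℕ} (A : Fin m → Finset (Fin n)) (S : Finset (Fin n))
    (hS : S.card ≤ r) (x : Fin m → Fin s → K) (y' : Fin n → Fin (r - S.card) → K)
    (hx : ∀ j ∈ S, LinearIndependent K
      (fun i : (Finset.univ.filter (fun i => j ∈ A i) : Finset (Fin m)) => x i))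
    (h : Crit x y' {p : Fin m × Fin n | p.2 ∈ A p.1 ∧ p.2 ∉ S}) :
    ∃ y : Fin n → Fin r → K, Crit x y {p : Fin m × Fin n | p.2 ∈ A p.1} := by
  have e : Fin (r - S.card) ⊕ S ≃ Fin r := Fintype.equivFinOfCardEq (by simp; omega)
  let y : Fin n → Fin r → K := fun j l =>
    Sum.elim (fun a => if j ∈ S then 0 else y' j a) (fun t : S => if j = t then 1 else 0)
      (e.symm l)
  refine ⟨y, fun c hc hs => ?_⟩
  have h1 : ∀ i j, (if j ∈ S then 0 else c i j) = 0 := by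
    refine h (fun i j => if j ∈ S then 0 else c i j) ?_ ?_
    · intro i j hij
      by_cases hj : j ∈ S
      · simp [hj]
      · simp only [hj, if_false]
        apply hc
        intro h'
        exact hij ⟨h', hj⟩
    · intro k l
      refine Eq.trans ?_ (hs k (e (Sum.inl l)))
      refine Finset.sum_congr rfl fun i _ => Finset.sum_congr rfl fun j _ => ?_
      by_cases hj : j ∈ S
      · simp only [y, hj, if_true, Equiv.symm_apply_apply, Sum.elim_inl, zero_mul, mul_zero]
      · simp only [y, hj, if_false, Equiv.symm_apply_apply, Sum.elim_inl]
  intro i j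
  by_cases hj : j ∈ S
  · refine basis_inj x _ (hx j hj) (fun i => c i j) ?_ ?_ i
    · intro i hi
      apply hc
      simpa using hi
    · intro k
      rw [← hs k (e (Sum.inr ⟨j, hj⟩))]
      refine Finset.sum_congr rfl fun i _ => ?_
      simp [y]
  · simpa [hj] using h1 i j

lemma core2 {K : Type*} [Field K] {m n r s : ℕ} (A : Fin m → Finset (Fin n)) (S : Finset (Fin n))
    (x : Fin m → Fin s → K) (y : Fin n → Fin r → K)
    (hx : ∀ j ∈ S, LinearIndependent K
      (fun i : (Finset.univ.filter (fun i => j ∈ A i) : Finset (Fin m)) => x i))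
    (hcard : ∀ j ∈ S, (Finset.univ.filter (fun i => j ∈ A i) : Finset (Fin m)).card = s)
    (hy : LinearIndependent K (fun j : S => y j))
    (h : Crit x y {p : Fin m × Fin n | p.2 ∈ A p.1}) :
    ∃ y' : Fin n → Fin (r - S.card) → K,
      Crit x y' {p : Fin m × Fin n | p.2 ∈ A p.1 ∧ p.2 ∉ S} := by
  let V := Submodule.span K (Set.range (fun j : S => y j))
  have hV : Module.finrank K V = S.card := by
    simpa using finrank_span_eq_card hy
  have hQ : Module.finrank K ((Fin r → K) ⧸ V) = r - S.card := by
    have := V.finrank_quotient_add_finrank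
    rw [hV] at this
    simp only [Module.finrank_fin_fun] at this
    omega
  have e : ((Fin r → K) ⧸ V) ≃ₗ[K] (Fin (r - S.card) → K) :=
    LinearEquiv.ofFinrankEq _ _ (by simp [hQ])
  let π : (Fin r → K) →ₗ[K] (Fin (r - S.card) → K) := e.toLinearMap ∘ₗ V.mkQ
  have hπ : ∀ z, π z = 0 → z ∈ V := by
    intro z hz
    have : V.mkQ z = 0 := e.injective (by simpa [π] using hz)
    simpa using this
  refine ⟨fun j => π (y j), fun c hc hs => ?_⟩
  let z : Fin s → Fin r → K := fun k => ∑ i, ∑ j, (c i j * x i k) • y j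
  have hz : ∀ k, z k ∈ V := by
    intro k
    apply hπ
    ext l
    rw [Pi.zero_apply, ← hs k l]
    simp [z, map_sum, Finset.sum_apply, mul_assoc]
  have hd : ∀ k, ∃ d : S → K, ∑ j, d j • y j = z k := fun k =>
    (Submodule.mem_span_range_iff_exists_fun K).1 (hz k)
  choose d hd using hd
  have ha : ∀ j : S, ∃ a : Fin m → K, (∀ i, j.1 ∉ A i → a i = 0) ∧
      ∀ k, ∑ i, a i * x i k = d k j := by
    intro j
    obtain ⟨a, h1, h2⟩ := basis_surj x _ (hx j j.2) (hcard j j.2) (fun k => d k j)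
    exact ⟨a, fun i hi => h1 i (by simpa using hi), h2⟩
  choose a ha1 ha2 using ha
  let c' : Fin m → Fin n → K := fun i j => if h : j ∈ S then - a ⟨j, h⟩ i else c i j
  have hc' : ∀ i j, c' i j = 0 := by
    refine h c' ?_ ?_
    · intro i j hij
      by_cases hj : j ∈ S
      · simp only [c', hj, dif_pos, neg_eq_zero]
        exact ha1 _ _ hij
      · simp only [c', hj, dif_neg, not_false_eq_true]
        exact hc _ _ (fun h' => hij h'.1)
    · intro k l
      have e1 : ∀ i j, c' i j * (x i k * y j l) = c i j * (x i k * y j l) -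
          (if h : j ∈ S then a ⟨j, h⟩ i else 0) * (x i k * y j l) := by
        intro i j
        by_cases hj : j ∈ S
        · have : c i j = 0 := hc _ _ (fun h' => h'.2 hj)
          simp [c', hj, this]
        · simp [c', hj]
      simp only [e1, Finset.sum_sub_distrib]
      rw [sub_eq_zero]
      have e2 : ∑ i, ∑ j, c i j * (x i k * y j l) = z k l := by
        simp [z, Finset.sum_apply, mul_assoc]
      rw [e2, ← hd, Finset.sum_comm]
      simp only [Finset.sum_apply, Pi.smul_apply, smul_eq_mul]
      rw [← Finset.sum_subset (Finset.subset_univ S), ← Finset.sum_coe_sort S]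
      · refine Finset.sum_congr rfl fun j _ => ?_
        rw [← ha2, Finset.sum_mul]
        refine Finset.sum_congr rfl fun i _ => ?_
        simp [mul_assoc]
      · intro j _ hj
        simp [hj]
  intro i j
  by_cases hj : j ∈ S
  · exact hc _ _ (fun h' => h'.2 hj)
  · simpa [c', hj] using hc' i j

theorem quotient_S3 (F : Type*) [Field F] (m n r : ℕ) (hm : 3 ≤ m) (hr : r ≤ n)
    (A : Fin m → Finset (Fin n))
    (hmult : ∀ j : Fin n, (Finset.univ.filter (fun i => j ∈ A i)).card ≤ 3)
    (hS3 : (Smult A 3).card ≤ r) :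
    TensorIndep F m n 3 r {p : Fin m × Fin n | p.2 ∈ A p.1} ↔
      TensorIndep F m n 3 (r - (Smult A 3).card)
        {p : Fin m × Fin n | p.2 ∈ A p.1 ∧ p.2 ∉ Smult A 3} := by
  have hcard : ∀ j ∈ Smult A 3,
      (Finset.univ.filter (fun i => j ∈ A i) : Finset (Fin m)).card = 3 := by
    intro j hj
    simpa [Smult] using hj
  constructor
  · intro h
    rw [tensor_crit] at h
    obtain ⟨y', hy'⟩ := core2 A (Smult A 3) _ _ (fun j hj => gx_indep F m n 3 r _ (hcard j hj))
      hcard (gy_indep F m n 3 r _ hS3) h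
    exact tensor_of_spec F m n 3 _ _ _ y' hy'
  · intro h
    rw [tensor_crit] at h
    obtain ⟨y, hy⟩ := core1 A (Smult A 3) hS3 _ _
      (fun j hj => gx_indep F m n 3 _ _ (hcard j hj)) h
    exact tensor_of_spec F m n 3 _ _ _ y hy
end
end

section
/- Let 0 ≤ a ≤ m and 0 ≤ b ≤ n, and let G ⊆ [m]×[n] be independent in the bipartite rigidity matroid B_{m,n}(a,b) (i.e., the columns of R_{m,n}(a,b) indexed by G are linearly independent). Then for all subsets S ⊆ [m] and T ⊆ [n] with |S| ≥ a and |T| ≥ b, we have |G ∩ (S×T)| ≤ |T|·a + |S|·b − a·b; that is, G does not violate the (a,b)-Laman condition. -/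
open scoped Classical

noncomputable section

/-- The rational function field `ℚ(x_{pj}, y_{qℓ})` with `(p,j) ∈ [m]×[a]`,
`(q,ℓ) ∈ [n]×[b]`. -/
abbrev RField (m n a b : ℕ) :=
  FractionRing (MvPolynomial ((Fin m × Fin a) ⊕ (Fin n × Fin b)) ℚ)

/-- The column of the bipartite rigidity matrix `R_{m,n}(a,b)` labeled by
`e ∈ [m]×[n]`: the row labeled `(j,k) ∈ [a]×[n]` has entry `x_{e.1, j}` if `e.2 = k`
and `0` otherwise, and the row labeled `(ℓ,i) ∈ [b]×[m]` has entry `y_{e.2, ℓ}` if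
`e.1 = i` and `0` otherwise. -/
noncomputable def rigCol (m n a b : ℕ) (e : Fin m × Fin n) :
    (Fin a × Fin n) ⊕ (Fin b × Fin m) → RField m n a b := fun row =>
  match row with
  | Sum.inl (j, k) =>
      if e.2 = k then
        algebraMap (MvPolynomial ((Fin m × Fin a) ⊕ (Fin n × Fin b)) ℚ) (RField m n a b)
          (MvPolynomial.X (Sum.inl (e.1, j)))
      else 0
  | Sum.inr (l, i) =>
      if e.1 = i then
        algebraMap (MvPolynomial ((Fin m × Fin a) ⊕ (Fin n × Fin b)) ℚ) (RField m n a b)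
          (MvPolynomial.X (Sum.inr (e.2, l)))
      else 0

/-- `G` is independent in the bipartite rigidity matroid `B_{m,n}(a,b)`: the columns of
`R_{m,n}(a,b)` indexed by `G` are linearly independent. -/
def RigIndep (m n a b : ℕ) (G : Set (Fin m × Fin n)) : Prop :=
  LinearIndependent (RField m n a b) (fun e : G => rigCol m n a b e)

theorem ymat_det_ne_zero (m n a b : ℕ) (f : Fin b ↪ Fin n) :
    (Matrix.of fun (i l : Fin b) => algebraMap
      (MvPolynomial ((Fin m × Fin a) ⊕ (Fin n × Fin b)) ℚ) (RField m n a b)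
          (MvPolynomial.X (Sum.inr (f i, l)))).det ≠ 0 := by
  have h0 := Matrix.det_mvPolynomialX_ne_zero (Fin b) ℚ
  let g : Fin b × Fin b → (Fin m × Fin a) ⊕ (Fin n × Fin b) := fun p => Sum.inr (f p.1, p.2)
  have hg : Function.Injective g := by
    rintro ⟨i, l⟩ ⟨i', l'⟩ h
    simpa [g] using h
  let φ : MvPolynomial (Fin b × Fin b) ℚ →+* RField m n a b :=
    (algebraMap (MvPolynomial ((Fin m × Fin a) ⊕ (Fin n × Fin b)) ℚ) (RField m n a b)).comp
      (MvPolynomial.rename g).toRingHom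
  have hφ : Function.Injective φ :=
    (IsFractionRing.injective _ _).comp (MvPolynomial.rename_injective g hg)
  have hM : (Matrix.of fun (i l : Fin b) => algebraMap
      (MvPolynomial ((Fin m × Fin a) ⊕ (Fin n × Fin b)) ℚ) (RField m n a b)
          (MvPolynomial.X (Sum.inr (f i, l)))) =
      φ.mapMatrix (Matrix.mvPolynomialX (Fin b) (Fin b) ℚ) := by
    ext i l
    simp [φ, g, Matrix.mvPolynomialX]
  rw [hM, ← RingHom.map_det]
  exact fun h => h0 (hφ (by rw [h, map_zero]))

theorem phi_surj {K : Type*} [Field K] {m n a b : ℕ} (S : Finset (Fin m)) (T : Finset (Fin n))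
    (x : Fin m → Fin a → K) (y : Fin n → Fin b → K) (f : Fin b ↪ T)
    (hdet : (Matrix.of fun (i l : Fin b) => y (f i) l).det ≠ 0)
    (Φ : ((Fin a × T) ⊕ (Fin b × S) → K) →ₗ[K] (Fin a × Fin b → K))
    (hΦ : ∀ v p, Φ v p = ∑ k : T, y k p.2 * v (Sum.inl (p.1, k))
      - ∑ i : S, x i p.1 * v (Sum.inr (p.2, i))) : Function.Surjective Φ := by
  intro w
  set M : Matrix (Fin b) (Fin b) K := Matrix.of fun (i l : Fin b) => y (f i) l with hM
  let u : Fin a → Fin b → K := fun j => Matrix.vecMul (fun l => w (j, l)) M⁻¹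
  refine ⟨Sum.elim (fun p => ∑ i, if f i = p.2 then u p.1 i else 0) (fun _ => 0), ?_⟩
  ext ⟨j, l⟩
  rw [hΦ]
  simp only [Sum.elim_inl, Sum.elim_inr, mul_zero, Finset.sum_const_zero, sub_zero, Finset.mul_sum]
  rw [Finset.sum_comm]
  simp only [mul_ite, mul_zero, Finset.sum_ite_eq, Finset.mem_univ, if_true]
  have hu : Matrix.vecMul (u j) M = fun l => w (j, l) := by
    simp only [u, Matrix.vecMul_vecMul]
    rw [Matrix.nonsing_inv_mul _ (isUnit_iff_ne_zero.mpr hdet), Matrix.vecMul_one]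
  have := congrFun hu l
  simp only [Matrix.vecMul, dotProduct, hM, Matrix.of_apply] at this
  rw [← this]
  exact Finset.sum_congr rfl fun i _ => mul_comm _ _

theorem indep_satisfies_laman (m n a b : ℕ) (ha : a ≤ m) (hb : b ≤ n)
    (G : Finset (Fin m × Fin n)) (h : RigIndep m n a b (↑G : Set (Fin m × Fin n))) :
    ∀ (S : Finset (Fin m)) (T : Finset (Fin n)), a ≤ S.card → b ≤ T.card →
      (G ∩ S ×ˢ T).card + a * b ≤ T.card * a + S.card * b := by
  intro S T _ hT
  obtain ⟨f⟩ : Nonempty (Fin b ↪ T) :=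
    Function.Embedding.nonempty_of_card_le (by simpa using hT)
  let K := RField m n a b
  let x : Fin m → Fin a → K := fun p j =>
    algebraMap (MvPolynomial ((Fin m × Fin a) ⊕ (Fin n × Fin b)) ℚ) (RField m n a b)
          (MvPolynomial.X (Sum.inl (p, j)))
  let y : Fin n → Fin b → K := fun q l =>
    algebraMap (MvPolynomial ((Fin m × Fin a) ⊕ (Fin n × Fin b)) ℚ) (RField m n a b)
          (MvPolynomial.X (Sum.inr (q, l)))
  have hdet : (Matrix.of fun (i l : Fin b) => y (f i) l).det ≠ 0 :=
    ymat_det_ne_zero m n a b (f.trans (Function.Embedding.subtype _))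
  let Φ : ((Fin a × T) ⊕ (Fin b × S) → K) →ₗ[K] (Fin a × Fin b → K) :=
    { toFun := fun v p => ∑ k : T, y k p.2 * v (Sum.inl (p.1, k))
        - ∑ i : S, x i p.1 * v (Sum.inr (p.2, i))
      map_add' := by
        intro v w
        ext p
        simp only [Pi.add_apply, mul_add, Finset.sum_add_distrib]
        ring
      map_smul' := by
        intro c v
        ext p
        simp only [Pi.smul_apply, smul_eq_mul, RingHom.id_apply, mul_sub]
        congr 1 <;>
          (rw [Finset.mul_sum]; exact Finset.sum_congr rfl fun i _ => mul_left_comm _ _ _) }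
  have hsurj : Function.Surjective Φ := phi_surj S T x y f hdet Φ (fun v p => rfl)
  have hrank := Φ.finrank_range_add_finrank_ker
  rw [LinearMap.range_eq_top.mpr hsurj, finrank_top, Module.finrank_fintype_fun_eq_card,
    Module.finrank_fintype_fun_eq_card] at hrank
  simp only [Fintype.card_prod, Fintype.card_sum, Fintype.card_fin, Fintype.card_coe] at hrank
  let s : (Fin a × T) ⊕ (Fin b × S) → (Fin a × Fin n) ⊕ (Fin b × Fin m) :=
    Sum.map (Prod.map id Subtype.val) (Prod.map id Subtype.val)
  let P : ((Fin a × Fin n) ⊕ (Fin b × Fin m) → K) →ₗ[K] ((Fin a × T) ⊕ (Fin b × S) → K) :=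
    LinearMap.funLeft K K s
  let G' := G ∩ S ×ˢ T
  have hmem : ∀ e : G', e.1 ∈ G ∧ e.1.1 ∈ S ∧ e.1.2 ∈ T := by
    intro e
    have h1 := Finset.mem_inter.mp e.2
    exact ⟨h1.1, Finset.mem_product.mp h1.2⟩
  have hker : ∀ e : G', P (rigCol m n a b e.1) ∈ LinearMap.ker Φ := by
    intro e
    obtain ⟨_, h1, h2⟩ := hmem e
    rw [LinearMap.mem_ker]
    ext ⟨j, l⟩
    change ∑ k : T, y k l * (if e.1.2 = k.1 then x e.1.1 j else 0)
        - ∑ i : S, x i j * (if e.1.1 = i.1 then y e.1.2 l else 0) = 0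
    rw [Finset.sum_coe_sort T (fun k => y k l * (if e.1.2 = k then x e.1.1 j else 0)),
      Finset.sum_coe_sort S (fun i => x i j * (if e.1.1 = i then y e.1.2 l else 0))]
    simp only [mul_ite, mul_zero, Finset.sum_ite_eq, h1, h2, if_true]
    ring
  have hli : LinearIndependent K (fun e : G' => rigCol m n a b e.1) :=
    LinearIndependent.comp h (fun e : G' => ⟨e.1, (hmem e).1⟩)
      (fun e e' hh => Subtype.ext (by simpa using hh))
  have hli2 : LinearIndependent K (fun e : G' => P (rigCol m n a b e.1)) := by
    rw [Fintype.linearIndependent_iff] at hli ⊢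
    intro c hc
    apply hli c
    ext r
    rw [Finset.sum_apply]
    by_cases hr : ∃ r', s r' = r
    · obtain ⟨r', rfl⟩ := hr
      have := congrFun hc r'
      rw [Finset.sum_apply] at this
      exact this
    · apply Finset.sum_eq_zero
      intro e _
      obtain ⟨_, h1, h2⟩ := hmem e
      have : rigCol m n a b e.1 r = 0 := by
        rcases r with ⟨j, k⟩ | ⟨l, i⟩
        · refine if_neg fun (hk : e.1.2 = k) => hr ⟨Sum.inl (j, ⟨k, hk ▸ h2⟩), rfl⟩
        · refine if_neg fun (hk : e.1.1 = i) => hr ⟨Sum.inr (l, ⟨i, hk ▸ h1⟩), rfl⟩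
      simp [this]
  have hli3 : LinearIndependent K
      (fun e : G' => (⟨P (rigCol m n a b e.1), hker e⟩ : LinearMap.ker Φ)) :=
    LinearIndependent.of_comp (LinearMap.ker Φ).subtype hli2
  have hcard := hli3.fintype_card_le_finrank
  rw [Fintype.card_coe] at hcard
  change G'.card + a * b ≤ _
  rw [mul_comm T.card a, mul_comm S.card b]
  omega
end
end
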